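/- arXiv:2509.17326 — 2 statements merged into one kernel-verified Lean document; each statement's English description precedes it below -/
import Mathlib

section
/- Let K ⊂ ℝ^n (n ≥ 3) be a convex body, H a hyperplane, and p an interior point of K not lying on any hyperplane of symmetry of K parallel to H. Suppose p is a Larman point of K but not a revolution point, and for every hyperplane Π through p the section Π ∩ K has an (n−2)-plane of symmetry parallel to H. Then K is an ellipsoid of revolution with an axis of revolution perpendicular to H. -/
noncomputable section

open Metric Set MeasureTheory

/-- Euclidean n-space. -/
abbrev Euc (n : ℕ) := EuclideanSpace ℝ (Fin n)

/-- A convex body: compact, convex, with nonempty interior. -/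
def IsConvexBody {n : ℕ} (K : Set (Euc n)) : Prop :=
  IsCompact K ∧ Convex ℝ K ∧ (interior K).Nonempty

/-- `f` is the (orthogonal) reflection of the space with fixed-point set the affine
subspace `A`: an involutive isometry whose fixed points are exactly `A`. -/
def IsReflectionFix {n : ℕ} (f : Euc n → Euc n) (A : AffineSubspace ℝ (Euc n)) : Prop :=
  Isometry f ∧ f ∘ f = id ∧ {x | f x = x} = (A : Set (Euc n))

/-- `A` is a plane of symmetry of the set `K`. -/
def IsSymmetryPlane {n : ℕ} (K : Set (Euc n)) (A : AffineSubspace ℝ (Euc n)) : Prop :=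
  ∃ f : Euc n → Euc n, IsReflectionFix f A ∧ f '' K = K

/-- `L` is a plane of symmetry of the set `s` within the flat `P`:
some involutive isometry of the ambient space preserves `P`, has exactly `L` as
fixed-point set inside `P`, and maps `s` onto itself. -/
def IsSymmPlaneOfIn {n : ℕ} (s : Set (Euc n)) (P L : AffineSubspace ℝ (Euc n)) : Prop :=
  L ≤ P ∧ ∃ f : Euc n → Euc n, Isometry f ∧ f ∘ f = id ∧
    f '' (P : Set (Euc n)) = (P : Set (Euc n)) ∧
    {x ∈ (P : Set (Euc n)) | f x = x} = (L : Set (Euc n)) ∧ f '' s = s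

/-- `L` is a plane of symmetry of the section `P ∩ K` within the flat `P`. -/
def IsSectionSymmPlane {n : ℕ} (K : Set (Euc n)) (P L : AffineSubspace ℝ (Euc n)) : Prop :=
  IsSymmPlaneOfIn ((P : Set (Euc n)) ∩ K) P L

/-- A hyperplane: a nonempty affine subspace whose direction has dimension `n - 1`. -/
def IsHyperplane {n : ℕ} (A : AffineSubspace ℝ (Euc n)) : Prop :=
  (A : Set (Euc n)).Nonempty ∧ Module.finrank ℝ A.direction = n - 1

/-- A rotation about the affine subspace `L`: an affine isometry fixing `L`
pointwise whose linear part has determinant one (orientation preserving). -/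
def IsRotationAbout {n : ℕ} (f : Euc n ≃ᵃⁱ[ℝ] Euc n) (L : AffineSubspace ℝ (Euc n)) : Prop :=
  (∀ x ∈ L, f x = x) ∧
    LinearMap.det (f.linearIsometryEquiv.toLinearEquiv : Euc n →ₗ[ℝ] Euc n) = 1

/-- A body of revolution with axis the line `L`. -/
def IsRevolutionBody {n : ℕ} (K : Set (Euc n)) (L : AffineSubspace ℝ (Euc n)) : Prop :=
  IsConvexBody K ∧ (L : Set (Euc n)).Nonempty ∧ Module.finrank ℝ L.direction = 1 ∧
    ∀ f : Euc n ≃ᵃⁱ[ℝ] Euc n, IsRotationAbout f L → f '' K = K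

/-- A `k`-dimensional ellipsoid: affine image of a `k`-dimensional unit ball. -/
def IsEllipsoidOfDim {n : ℕ} (k : ℕ) (s : Set (Euc n)) : Prop :=
  ∃ (T : Euc n ≃ᵃ[ℝ] Euc n) (V : Submodule ℝ (Euc n)), Module.finrank ℝ V = k ∧
    s = T '' (closedBall 0 1 ∩ (V : Set (Euc n)))

/-- The shadow boundary of `K` with respect to the direction submodule `D`:
the union of the touching sets of all supporting flats of `K` with direction `D`. -/
def shadowBoundary {n : ℕ} (K : Set (Euc n)) (D : Submodule ℝ (Euc n)) : Set (Euc n) :=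
  ⋃ l ∈ {l : AffineSubspace ℝ (Euc n) | l.direction = D ∧
      ((l : Set (Euc n)) ∩ K).Nonempty ∧ (l : Set (Euc n)) ∩ interior K = ∅},
    ((l : Set (Euc n)) ∩ K)

/-- `p` is a Larman point of `K`: every hyperplane section of `K` through `p` has
an `(n-2)`-plane of symmetry. -/
def IsLarmanPoint {n : ℕ} (K : Set (Euc n)) (p : Euc n) : Prop :=
  p ∈ interior K ∧ ∀ P : AffineSubspace ℝ (Euc n), IsHyperplane P → p ∈ P →
    ∃ L : AffineSubspace ℝ (Euc n), Module.finrank ℝ L.direction = n - 2 ∧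
      IsSectionSymmPlane K P L

/-- `p` is a revolution point of `K`: every hyperplane section of `K` through `p` has
an `(n-2)`-plane of symmetry containing `p`. -/
def IsRevolutionPoint {n : ℕ} (K : Set (Euc n)) (p : Euc n) : Prop :=
  p ∈ interior K ∧ ∀ P : AffineSubspace ℝ (Euc n), IsHyperplane P → p ∈ P →
    ∃ L : AffineSubspace ℝ (Euc n), Module.finrank ℝ L.direction = n - 2 ∧ p ∈ L ∧
      IsSectionSymmPlane K P L

/-!
Let `u` be a unit normal of `H`. In a hyperplane through `p` with normal `v - r • u`, where `v ⟂ u`,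
the plane of symmetry must have direction `{u, v}ᗮ`, so the chords of the section in the orthogonal
direction all have their midpoints at the same height over `H`. For `r = 0` this gives a hyperplane
of symmetry of `K` parallel to `H`. It does not contain `p`; take it as height `0` and let `p` lie
over the origin at height `-l`, so that `K` is `{(y, k) | |k| ≤ φ y}` for a concave `φ`. Every
direction `w ⟂ u` now comes with a constant `C w`, twice the common height of the midpoints of the
chords of `K` of direction `w + u` through the points `(x, -l)`, `x ⟂ w`.

For `x ⟂ v`, comparing the two ends of the chord over `x` of direction `t • v + u` as `t → 0`
shows that the derivative of `φ ^ 2` at `x` along `v` is the derivative `B v` of `C` at `0`. Hence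
`φ ^ 2 - B` has zero derivative in all directions orthogonal to the position vector, and is a
function of `‖x‖ ^ 2` alone. To second order, `C (t • v) - t * B v` is asymptotic to
`2 * l * m * t ^ 2`, where `m` is the derivative of that function at `‖x‖ ^ 2`. Since the left-hand
side does not involve `x` and `l ≠ 0`, `m` is constant, so `φ ^ 2` is the sum of a constant, `B` and
a multiple of `‖x‖ ^ 2`, and `K` is an ellipsoid of revolution.
-/

section Development

open Filter Topology
open scoped RealInnerProductSpace Pointwise

section VerticallySymmetric

variable {V : Type*} [NormedAddCommGroup V] {K : Set (V × ℝ)}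

/-- The points of `V` lying in the interior of `K` at height `0`; for a vertically symmetric body
this is the interior of the projection of `K`. -/
def innerShadow (K : Set (V × ℝ)) : Set V := {y | (y, (0 : ℝ)) ∈ interior K}

/-- The half-length of the vertical chord of `K` over `y`. -/
def halfHeight (K : Set (V × ℝ)) (y : V) : ℝ := sSup {k | (y, k) ∈ K}

lemma isOpen_innerShadow : IsOpen (innerShadow K) :=
  isOpen_interior.preimage (by fun_prop : Continuous fun y : V => (y, (0 : ℝ)))

variable [NormedSpace ℝ V]

/-- A convex body in `V × ℝ` that contains the origin in its interior and is symmetric with respect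
to the hyperplane of height `0`. -/
structure IsVerticallySymmetricBody (K : Set (V × ℝ)) : Prop where
  isCompact : IsCompact K
  convex : Convex ℝ K
  zero_mem_interior : (0 : V × ℝ) ∈ interior K
  neg_height_mem : ∀ {y k}, (y, k) ∈ K → (y, -k) ∈ K

/-- The intersection of `K` with the line through `(x, -l)` of direction `(w, 1)`, parametrised by
the height. -/
def chord (K : Set (V × ℝ)) (l : ℝ) (x w : V) : Set ℝ := {k | (x + (k + l) • w, k) ∈ K}

/-- The height of the upper end of a chord. The lower end is `-chordTop K (-l) x (-w)`. -/
def chordTop (K : Set (V × ℝ)) (l : ℝ) (x w : V) : ℝ := sSup (chord K l x w)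

lemma continuous_chord_param (l : ℝ) (x w : V) : Continuous fun k : ℝ => (x + (k + l) • w, k) := by
  fun_prop

namespace IsVerticallySymmetricBody

lemma convex_innerShadow (h : IsVerticallySymmetricBody K) : Convex ℝ (innerShadow K) := by
  intro x hx y hy a b ha hb hab
  simpa [innerShadow] using h.convex.interior hx hy ha hb hab

lemma zero_mem_innerShadow (h : IsVerticallySymmetricBody K) : (0 : V) ∈ innerShadow K :=
  h.zero_mem_interior

lemma isCompact_chord (h : IsVerticallySymmetricBody K) (l : ℝ) (x w : V) :
    IsCompact (chord K l x w) :=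
  (h.isCompact.image continuous_snd).of_isClosed_subset
    (h.isCompact.isClosed.preimage (continuous_chord_param l x w)) fun _ hk => ⟨_, hk, rfl⟩

lemma ordConnected_chord (h : IsVerticallySymmetricBody K) (l : ℝ) (x w : V) :
    (chord K l x w).OrdConnected := by
  have hline :
      chord K l x w = AffineMap.lineMap (x + l • w, (0 : ℝ)) (x + (1 + l) • w, 1) ⁻¹' K := by
    ext k
    have : AffineMap.lineMap (x + l • w, (0 : ℝ)) (x + (1 + l) • w, (1 : ℝ)) k
        = (x + (k + l) • w, k) := by
      ext
      · simp only [AffineMap.lineMap_apply, vsub_eq_sub, vadd_eq_add, Prod.fst_add, Prod.smul_fst,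
          Prod.fst_sub]
        module
      · simp [AffineMap.lineMap_apply]
    rw [mem_preimage, this, chord, mem_ofPred_eq]
  rw [hline]
  exact (h.convex.affine_preimage _).ordConnected

lemma isCompact_fiber (h : IsVerticallySymmetricBody K) (y : V) : IsCompact {k | (y, k) ∈ K} := by
  simpa [chord] using h.isCompact_chord 0 y 0

lemma ordConnected_fiber (h : IsVerticallySymmetricBody K) (y : V) :
    {k | (y, k) ∈ K}.OrdConnected := by
  simpa [chord] using h.ordConnected_chord 0 y 0

lemma mk_halfHeight_mem (h : IsVerticallySymmetricBody K) {y : V} {k : ℝ} (hk : (y, k) ∈ K) :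
    (y, halfHeight K y) ∈ K :=
  (h.isCompact_fiber y).sSup_mem ⟨k, hk⟩

lemma abs_le_halfHeight (h : IsVerticallySymmetricBody K) {y : V} {k : ℝ} (hk : (y, k) ∈ K) :
    |k| ≤ halfHeight K y :=
  abs_le'.2 ⟨le_csSup (h.isCompact_fiber y).bddAbove hk,
    le_csSup (h.isCompact_fiber y).bddAbove (h.neg_height_mem hk)⟩

lemma mem_of_abs_le_halfHeight (h : IsVerticallySymmetricBody K) {y : V} {k k₀ : ℝ}
    (hk₀ : (y, k₀) ∈ K) (hk : |k| ≤ halfHeight K y) : (y, k) ∈ K :=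
  (h.ordConnected_fiber y).out (h.neg_height_mem (h.mk_halfHeight_mem hk₀))
    (h.mk_halfHeight_mem hk₀) (abs_le.1 hk)

lemma mk_zero_mem (h : IsVerticallySymmetricBody K) {y : V} {k : ℝ} (hk : (y, k) ∈ K) :
    (y, (0 : ℝ)) ∈ K :=
  h.mem_of_abs_le_halfHeight hk (by simpa using (abs_nonneg k).trans (h.abs_le_halfHeight hk))

lemma halfHeight_pos (h : IsVerticallySymmetricBody K) {y : V} (hy : y ∈ innerShadow K) :
    0 < halfHeight K y := by
  have hcont : Continuous fun k : ℝ => (y, k) := by fun_prop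
  have hnear : ∀ᶠ k in 𝓝[>] (0 : ℝ), (y, k) ∈ interior K :=
    nhdsWithin_le_nhds ((isOpen_interior.preimage hcont).mem_nhds hy)
  obtain ⟨k, hk, hk0⟩ := (hnear.and self_mem_nhdsWithin).exists
  exact hk0.trans_le ((le_abs_self k).trans (h.abs_le_halfHeight (interior_subset hk)))

lemma mk_mem_interior (h : IsVerticallySymmetricBody K) {y : V} {k : ℝ} (hy : y ∈ innerShadow K)
    (hk : |k| < halfHeight K y) : (y, k) ∈ interior K := by
  obtain ⟨q, hkq, hq⟩ := exists_between hk
  have hq0 : 0 < q := (abs_nonneg k).trans_lt hkq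
  have hend : (y, k / q * halfHeight K y) ∈ K := by
    refine h.mem_of_abs_le_halfHeight (interior_subset hy) ?_
    rw [abs_mul, abs_div, abs_of_pos hq0, abs_of_pos (h.halfHeight_pos hy)]
    exact mul_le_of_le_one_left (h.halfHeight_pos hy).le ((div_le_one hq0).2 hkq.le)
  have hcombo := h.convex.combo_interior_self_mem_interior hy hend
    (sub_pos.2 ((div_lt_one (h.halfHeight_pos hy)).2 hq))
    (div_pos hq0 (h.halfHeight_pos hy)).le (sub_add_cancel 1 _)
  convert hcombo using 1
  ext
  · simp only [Prod.smul_mk, Prod.mk_add_mk]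
    module
  · have := (h.halfHeight_pos hy).ne'
    simp only [Prod.smul_mk, Prod.mk_add_mk, smul_eq_mul]
    field_simp
    ring

lemma concaveOn_halfHeight (h : IsVerticallySymmetricBody K) :
    ConcaveOn ℝ (innerShadow K) (halfHeight K) :=
  ⟨h.convex_innerShadow, fun _ hx _ hy _ _ ha hb hab =>
    (le_abs_self _).trans <| h.abs_le_halfHeight <|
      h.convex (h.mk_halfHeight_mem (interior_subset hx)) (h.mk_halfHeight_mem (interior_subset hy))
        ha hb hab⟩

lemma chord_neg_neg (h : IsVerticallySymmetricBody K) (l : ℝ) (x w : V) :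
    chord K (-l) x (-w) = -chord K l x w := by
  ext k
  have hpt : x + (k + -l) • -w = x + (-k + l) • w := by module
  simp only [chord, mem_ofPred_eq, Set.mem_neg, hpt]
  exact ⟨h.neg_height_mem, fun hk => by simpa using h.neg_height_mem hk⟩

lemma sInf_chord (h : IsVerticallySymmetricBody K) (l : ℝ) (x w : V) :
    sInf (chord K l x w) = -chordTop K (-l) x (-w) := by
  rw [chordTop, h.chord_neg_neg, Real.sInf_def]

lemma eventually_mem_chord (h : IsVerticallySymmetricBody K) {x : V} (hx : x ∈ innerShadow K)
    (l : ℝ) {k : ℝ} (hk : |k| < halfHeight K x) : ∀ᶠ w in 𝓝 0, k ∈ chord K l x w := by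
  have hcont : Continuous fun w : V => (x + (k + l) • w, k) := by fun_prop
  have hnear : ∀ᶠ w in 𝓝 0, (x + (k + l) • w, k) ∈ interior K :=
    hcont.continuousAt.eventually_mem
      (isOpen_interior.mem_nhds (by simpa using h.mk_mem_interior hx hk))
  exact hnear.mono fun w hw => interior_subset (s := K) hw

lemma eventually_notMem_chord (h : IsVerticallySymmetricBody K) (x : V) (l : ℝ) {k : ℝ}
    (hk : halfHeight K x < |k|) : ∀ᶠ w in 𝓝 0, k ∉ chord K l x w := by
  have hcont : Continuous fun w : V => (x + (k + l) • w, k) := by fun_prop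
  refine hcont.continuousAt.eventually_mem (h.isCompact.isClosed.isOpen_compl.mem_nhds ?_)
  exact fun hmem => hk.not_ge (h.abs_le_halfHeight (by simpa using hmem))

lemma tendsto_chordTop (h : IsVerticallySymmetricBody K) {x : V} (hx : x ∈ innerShadow K)
    (l : ℝ) : Tendsto (chordTop K l x) (𝓝 0) (𝓝 (halfHeight K x)) := by
  have hpos := h.halfHeight_pos hx
  refine tendsto_order.2 ⟨fun a ha => ?_, fun a ha => ?_⟩
  · obtain ⟨b, hab, hb⟩ := exists_between (max_lt ha hpos)
    have hb0 : 0 < b := (le_max_right a 0).trans_lt hab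
    filter_upwards [h.eventually_mem_chord hx l ((abs_of_pos hb0).trans_lt hb)] with w hw
    exact ((le_max_left a 0).trans_lt hab).trans_le (le_csSup (h.isCompact_chord l x w).bddAbove hw)
  · filter_upwards [h.eventually_mem_chord hx l (k := 0) (by simpa using hpos),
      h.eventually_notMem_chord x l (ha.trans_le (le_abs_self a))] with w hw0 hwa
    by_contra! hle
    exact hwa ((h.ordConnected_chord l x w).out hw0 ((h.isCompact_chord l x w).sSup_mem ⟨0, hw0⟩)
      ⟨(hpos.trans ha).le, hle⟩)

lemma eventually_chord_nonempty (h : IsVerticallySymmetricBody K) {x : V}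
    (hx : x ∈ innerShadow K) (l : ℝ) : ∀ᶠ w in 𝓝 0, (chord K l x w).Nonempty :=
  (h.eventually_mem_chord hx l (k := 0) (by simpa using h.halfHeight_pos hx)).mono
    fun _ hw => ⟨0, hw⟩

lemma halfHeight_chordTop (h : IsVerticallySymmetricBody K) {x w : V}
    (hne : (chord K l x w).Nonempty) (hpos : 0 < chordTop K l x w)
    (hU : x + (chordTop K l x w + l) • w ∈ innerShadow K) :
    halfHeight K (x + (chordTop K l x w + l) • w) = chordTop K l x w := by
  have hmem : chordTop K l x w ∈ chord K l x w := (h.isCompact_chord l x w).sSup_mem hne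
  refine le_antisymm ?_ ((le_abs_self _).trans (h.abs_le_halfHeight hmem))
  by_contra! hlt
  have hint := h.mk_mem_interior hU ((abs_of_pos hpos).trans_lt hlt)
  have hnear : ∀ᶠ k in 𝓝[>] (chordTop K l x w), (x + (k + l) • w, k) ∈ interior K :=
    nhdsWithin_le_nhds ((continuous_chord_param l x w).continuousAt.eventually_mem
      (isOpen_interior.mem_nhds hint))
  obtain ⟨k, hk, hlt'⟩ := (hnear.and self_mem_nhdsWithin).exists
  exact (mem_Ioi.1 hlt').not_ge
    (le_csSup (h.isCompact_chord l x w).bddAbove (interior_subset (s := K) hk))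

lemma eventually_halfHeight_chordTop (h : IsVerticallySymmetricBody K) {x : V}
    (hx : x ∈ innerShadow K) (l : ℝ) :
    ∀ᶠ w in 𝓝 0, x + (chordTop K l x w + l) • w ∈ innerShadow K ∧
      halfHeight K (x + (chordTop K l x w + l) • w) = chordTop K l x w := by
  have hlim : Tendsto (fun w => x + (chordTop K l x w + l) • w) (𝓝 0) (𝓝 x) := by
    simpa using (((h.tendsto_chordTop hx l).add_const l).smul tendsto_id).const_add x
  filter_upwards [hlim.eventually_mem (isOpen_innerShadow.mem_nhds hx),
    (h.tendsto_chordTop hx l).eventually_const_lt (h.halfHeight_pos hx),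
    h.eventually_chord_nonempty hx l] with w hU hpos hne
  exact ⟨hU, h.halfHeight_chordTop hne hpos hU⟩

end IsVerticallySymmetricBody

end VerticallySymmetric

section OneSidedDerivatives

variable {E ι : Type*} [NormedAddCommGroup E] [NormedSpace ℝ E] {F : Filter ι} {τ a : ι → ℝ}
  {a₀ : ℝ}

lemma tendsto_slope_of_hasDerivWithinAt {g : ℝ → ℝ} {d x : ℝ} {s : Set ℝ}
    (hg : HasDerivWithinAt g d s x) (hτ : Tendsto τ F (𝓝[≠] 0)) (ha : Tendsto a F (𝓝 a₀))
    (hs : ∀ᶠ i in F, x + τ i * a i ∈ s) :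
    Tendsto (fun i => (g (x + τ i * a i) - g x) / τ i) F (𝓝 (a₀ * d)) := by
  have hτ0 : Tendsto τ F (𝓝 0) := hτ.mono_right nhdsWithin_le_nhds
  have hne : ∀ᶠ i in F, τ i ≠ 0 := hτ.eventually self_mem_nhdsWithin
  have hscaled : Tendsto (fun i => (τ i)⁻¹ • (τ i * a i)) F (𝓝 a₀) :=
    ha.congr' (hne.mono fun i hi => by simp [hi])
  have hlim := hg.hasFDerivWithinAt.lim (by simpa using hτ0.mul ha) hs hscaled
  simpa [div_eq_inv_mul] using hlim

lemma tendsto_slope_of_hasLineDerivAt {f : E → ℝ} {x v : E} {d : ℝ} (hf : HasLineDerivAt ℝ f d x v)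
    (hτ : Tendsto τ F (𝓝[≠] 0)) (ha : Tendsto a F (𝓝 a₀)) :
    Tendsto (fun i => (f (x + (τ i * a i) • v) - f x) / τ i) F (𝓝 (a₀ * d)) := by
  simpa using tendsto_slope_of_hasDerivWithinAt (HasDerivAt.hasDerivWithinAt hf) hτ ha
    (s := univ) (by simp)

lemma tendsto_slope_of_hasDerivWithinAt_Ici {f : E → ℝ} {x v : E} {p q : ℝ}
    (hp : HasDerivWithinAt (fun t : ℝ => f (x + t • v)) p (Ici 0) 0)
    (hq : HasDerivWithinAt (fun t : ℝ => f (x + t • -v)) q (Ici 0) 0)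
    (hτ : Tendsto τ F (𝓝[>] 0)) (ha : Tendsto a F (𝓝 a₀)) :
    Tendsto (fun i => (f (x + (τ i * a i) • v) - f x) / τ i) F (𝓝 (a₀⁺ * p + a₀⁻ * q)) := by
  have hτ' : Tendsto τ F (𝓝[≠] 0) := hτ.mono_right (nhdsGT_le_nhdsNE 0)
  have hτ0 : ∀ᶠ i in F, 0 < τ i := hτ.eventually self_mem_nhdsWithin
  have hpos := tendsto_slope_of_hasDerivWithinAt hp hτ' ((continuous_posPart.tendsto _).comp ha)
    (hτ0.mono fun i hi => by simpa using mul_nonneg hi.le (posPart_nonneg (a i)))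
  have hneg := tendsto_slope_of_hasDerivWithinAt hq hτ' ((continuous_negPart.tendsto _).comp ha)
    (hτ0.mono fun i hi => by simpa using mul_nonneg hi.le (negPart_nonneg (a i)))
  refine (hpos.add hneg).congr fun i => ?_
  rcases le_total 0 (a i) with h | h
  · simp [posPart_eq_self.2 h, negPart_eq_zero.2 h]
  · simp [posPart_eq_zero.2 h, negPart_eq_neg.2 h]

lemma exists_hasDerivWithinAt_Ici_of_concaveOn {f : E → ℝ} {U : Set E} (hf : ConcaveOn ℝ U f)
    (hU : IsOpen U) {x : E} (hx : x ∈ U) (v : E) :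
    ∃ d, HasDerivWithinAt (fun t : ℝ => f (x + t • v)) d (Ici 0) 0 := by
  have hcont : Continuous fun t : ℝ => x + t • v := by fun_prop
  have hline : ConcaveOn ℝ ((fun t : ℝ => x + t • v) ⁻¹' U) fun t => f (x + t • v) := by
    have hparam : ⇑(AffineMap.lineMap x (x + v)) = fun t : ℝ => x + t • v := by
      ext t
      simp [AffineMap.lineMap_apply, add_comm]
    have hcomp := hf.comp_affineMap (AffineMap.lineMap x (x + v))
    rw [hparam] at hcomp
    exact hcomp
  have h0 : (0 : ℝ) ∈ interior ((fun t : ℝ => x + t • v) ⁻¹' U) := by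
    simpa [(hU.preimage hcont).interior_eq] using hx
  have hneg := hline.neg.hasDerivWithinAt_rightDeriv_of_mem_interior h0
  exact ⟨_, by simpa [Function.comp_def] using hneg.neg.Ici_of_Ioi⟩

lemma hasLineDerivAt_of_hasDerivWithinAt_Ici {f : E → ℝ} {x v : E} {d : ℝ}
    (hp : HasDerivWithinAt (fun t : ℝ => f (x + t • v)) d (Ici 0) 0)
    (hq : HasDerivWithinAt (fun t : ℝ => f (x + t • -v)) (-d) (Ici 0) 0) :
    HasLineDerivAt ℝ f d x v := by
  have hleft : HasDerivWithinAt (fun t : ℝ => f (x + t • v)) d (Iic 0) 0 := by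
    have := HasDerivWithinAt.scomp (𝕜 := ℝ) (h := fun t : ℝ => -t) (h' := -1) (s := Iic 0) 0
      (by simpa using hq) (hasDerivAt_neg (0 : ℝ)).hasDerivWithinAt
      (fun t ht => by simpa using ht)
    simpa [Function.comp_def] using this
  have := hleft.union hp
  rwa [Iic_union_Ici, hasDerivWithinAt_univ] at this

end OneSidedDerivatives

section ConcaveFunctions

variable {E : Type*} [NormedAddCommGroup E] [NormedSpace ℝ E] {U : Set E} {f : E → ℝ}

lemma exists_supergradient_of_concaveOn (hf : ConcaveOn ℝ U f) (hU : IsOpen U)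
    (hcont : ContinuousOn f U) {x : E} (hx : x ∈ U) :
    ∃ A : E →L[ℝ] ℝ, ∀ y ∈ U, f y ≤ f x + A (y - x) := by
  have hopen : IsOpen {p : E × ℝ | p.1 ∈ U ∧ p.2 < f p.1} := by
    have hU' : IsOpen {p : E × ℝ | p.1 ∈ U} := hU.preimage continuous_fst
    have hdiff : ContinuousOn (fun p : E × ℝ => f p.1 - p.2) {p | p.1 ∈ U} :=
      (hcont.comp continuousOn_fst fun _ hp => hp).sub continuousOn_snd
    convert hdiff.isOpen_inter_preimage hU' (isOpen_Ioi (a := 0)) using 1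
    ext p
    simp
  obtain ⟨g, hg⟩ := geometric_hahn_banach_open_point hf.convex_strict_hypograph hopen
    (x := (x, f x)) fun hmem => lt_irrefl _ hmem.2
  have hsplit (y : E) (k : ℝ) : g (y, k) = g (y, 0) + k * g (0, 1) := by
    rw [← smul_eq_mul, ← map_smul, ← map_add]
    simp
  have hvert : 0 < g (0, 1) := by
    have := hg (x, f x - 1) ⟨hx, by simp⟩
    rw [hsplit, hsplit x (f x)] at this
    linarith
  refine ⟨-(g (0, 1))⁻¹ • g.comp (ContinuousLinearMap.inl ℝ E ℝ), fun y hy => ?_⟩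
  have hle : g (y, f y) ≤ g (x, f x) := by
    refine le_of_forall_pos_lt_add fun ε hε => ?_
    have := hg (y, f y - ε / g (0, 1)) ⟨hy, by simpa using div_pos hε hvert⟩
    rw [hsplit, sub_mul, div_mul_cancel₀ _ hvert.ne'] at this
    linarith [hsplit y (f y)]
  have hsub : g (y - x, 0) = g (y, 0) - g (x, 0) := by rw [← map_sub]; simp
  rw [hsplit, hsplit x (f x)] at hle
  simp only [_root_.smul_apply, ContinuousLinearMap.comp_apply,
    ContinuousLinearMap.inl_apply, smul_eq_mul, hsub]
  field_simp
  linarith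

lemma hasLineDerivAt_eq_of_supergradient (hU : IsOpen U) {x v : E} (hx : x ∈ U) {A : E →L[ℝ] ℝ}
    (hA : ∀ y ∈ U, f y ≤ f x + A (y - x)) {d : ℝ} (hd : HasLineDerivAt ℝ f d x v) : d = A v := by
  have hcont : Continuous fun t : ℝ => x + t • v := by fun_prop
  have hmax : IsLocalMax (fun t : ℝ => f (x + t • v) - t * A v) 0 := by
    filter_upwards [hcont.continuousAt.eventually_mem (hU.mem_nhds (by simpa using hx))] with t ht
    have := hA _ ht
    simp only [add_sub_cancel_left, map_smul, smul_eq_mul] at this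
    simpa using this
  have hzero := hmax.hasDerivAt_eq_zero
    (HasDerivAt.sub (f := fun t : ℝ => f (x + t • v)) hd
      ((hasDerivAt_id (0 : ℝ)).mul_const (A v)))
  linarith

variable [FiniteDimensional ℝ E]

lemma exists_lipschitzWith_eventuallyEq_of_concaveOn (hf : ConcaveOn ℝ U f) (hU : IsOpen U) {x : E}
    (hx : x ∈ U) : ∃ M, ∃ g : E → ℝ, LipschitzWith M g ∧ g =ᶠ[𝓝 x] f := by
  obtain ⟨M, s, hs, hlip⟩ := hf.locallyLipschitzOn hU hx
  obtain ⟨g, hg, heq⟩ := hlip.extend_real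
  rw [hU.nhdsWithin_eq hx] at hs
  exact ⟨M, g, hg, mem_of_superset hs heq.symm⟩

lemma subset_closure_differentiableAt_of_concaveOn (hf : ConcaveOn ℝ U f) (hU : IsOpen U) :
    U ⊆ closure {y ∈ U | DifferentiableAt ℝ f y} := by
  intro x hx
  borelize E
  obtain ⟨M, g, hg, heq⟩ := exists_lipschitzWith_eventuallyEq_of_concaveOn hf hU hx
  have hdense : Dense {y | DifferentiableAt ℝ g y} :=
    Measure.dense_of_ae (hg.ae_differentiableAt (μ := Measure.addHaar))
  rw [mem_closure_iff_frequently]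
  refine ((mem_closure_iff_frequently.1 (hdense x)).and_eventually
    (heq.eventuallyEq_nhds.and (hU.mem_nhds hx))).mono fun y ⟨hy, heqy, hyU⟩ => ⟨hyU, ?_⟩
  exact heqy.differentiableAt_iff.1 hy

lemma hasFDerivAt_of_concaveOn_of_closure (hf : ConcaveOn ℝ U f) (hU : IsOpen U) {x : E}
    (hx : x ∈ U) {A : E →L[ℝ] ℝ} {s : Set E} (hs : sphere 0 1 ⊆ closure s)
    (hA : ∀ v ∈ s, HasLineDerivAt ℝ f (A v) x v) : HasFDerivAt f A x := by
  obtain ⟨M, g, hg, heq⟩ := exists_lipschitzWith_eventuallyEq_of_concaveOn hf hU hx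
  exact (hg.hasFDerivAt_of_hasLineDerivAt_of_closure hs fun v hv =>
    heq.hasLineDerivAt_iff.2 (hA v hv)).congr_of_eventuallyEq heq.symm

end ConcaveFunctions

section Orthogonality

variable {V : Type*} [NormedAddCommGroup V] [InnerProductSpace ℝ V] [FiniteDimensional ℝ V]

lemma exists_norm_eq_one_inner_eq_zero (hV : 2 ≤ Module.finrank ℝ V) (v : V) :
    ∃ e : V, ‖e‖ = 1 ∧ ⟪v, e⟫ = 0 := by
  have hspan : Module.finrank ℝ (ℝ ∙ v) ≤ 1 := by
    simpa using finrank_span_le_card (R := ℝ) ({v} : Set V)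
  have hpos : 0 < Module.finrank ℝ (ℝ ∙ v)ᗮ := by
    have := Submodule.finrank_add_finrank_orthogonal (ℝ ∙ v)
    omega
  have : Nontrivial (ℝ ∙ v)ᗮ := Module.finrank_pos_iff.1 hpos
  obtain ⟨e, he⟩ := exists_norm_eq (ℝ ∙ v)ᗮ zero_le_one
  exact ⟨e, he, Submodule.mem_orthogonal_singleton_iff_inner_right.1 e.2⟩

lemma mem_closure_setOf_inner_eq_zero (hV : 2 ≤ Module.finrank ℝ V) {U D : Set V} (hU : U ∈ 𝓝 0)
    (hD : U ⊆ closure D) (v : V) : v ∈ closure {w | ∃ y ∈ D, ⟪y, w⟫ = 0} := by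
  obtain ⟨e, he, hve⟩ := exists_norm_eq_one_inner_eq_zero hV v
  obtain ⟨s, hsU, hs⟩ : ∃ s : ℝ, s • e ∈ U ∧ s ≠ 0 := by
    have hlim : Tendsto (fun s : ℝ => s • e) (𝓝[≠] 0) (𝓝 0) :=
      ((continuous_id.smul continuous_const).tendsto' _ _ (zero_smul ℝ e)).mono_left
        nhdsWithin_le_nhds
    exact ((hlim.eventually hU).and self_mem_nhdsWithin).exists
  have hse : ‖s • e‖ ≠ 0 := by simpa [norm_smul, he] using hs
  have hproj : ContinuousAt (fun y : V => v - (⟪y, v⟫ / ‖y‖ ^ 2) • y) (s • e) := by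
    fun_prop (disch := positivity)
  have hmem := mem_closure_image hproj (hD hsU)
  simp only [inner_smul_left, real_inner_comm v e, hve, mul_zero, zero_div, zero_smul,
    sub_zero] at hmem
  refine closure_mono ?_ hmem
  rintro _ ⟨y, hy, rfl⟩
  refine ⟨y, hy, ?_⟩
  rcases eq_or_ne y 0 with rfl | hy0
  · simp
  · rw [inner_sub_right, inner_smul_right, real_inner_self_eq_norm_sq,
      div_mul_cancel₀ _ (by positivity), real_inner_comm, sub_self]

end Orthogonality

section SectionCentres

variable {V : Type*} [NormedAddCommGroup V] [InnerProductSpace ℝ V] {K : Set (V × ℝ)} {l : ℝ}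
  {C : V → ℝ}

/-- The normal form of the symmetry hypothesis: the section of the vertically symmetric body `K` by
the hyperplane `{(x + (k + l) • w, k) | x ⟂ w}` through `(0, -l)` is symmetric with respect to its
points of height `C w / 2`. -/
structure HasSectionCentres (K : Set (V × ℝ)) (l : ℝ) (C : V → ℝ) : Prop
    extends IsVerticallySymmetricBody K where
  offset_ne_zero : l ≠ 0
  reflect_mem : ∀ {w x : V} {k : ℝ}, ⟪x, w⟫ = 0 → (x + (k + l) • w, k) ∈ K →
    (x + (C w - k + l) • w, C w - k) ∈ K

namespace HasSectionCentres

lemma centre_eq_chordTop_sub (h : HasSectionCentres K l C) {x w : V} (hxw : ⟪x, w⟫ = 0)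
    (hne : (chord K l x w).Nonempty) : C w = chordTop K l x w - chordTop K (-l) x (-w) := by
  have hcpt := h.isCompact_chord l x w
  have hbot := csInf_le hcpt.bddBelow (h.reflect_mem hxw (hcpt.sSup_mem hne) :)
  have htop := le_csSup hcpt.bddAbove (h.reflect_mem hxw (hcpt.sInf_mem hne) :)
  rw [h.sInf_chord] at hbot htop
  simp only [chordTop] at hbot htop ⊢
  linarith

lemma tendsto_centre (h : HasSectionCentres K l C) : Tendsto C (𝓝 0) (𝓝 0) := by
  have hU := h.zero_mem_innerShadow
  have hlow := (h.tendsto_chordTop hU (-l)).comp (tendsto_neg (0 : V) |>.trans_eq (by simp))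
  have hlim := (h.tendsto_chordTop hU l).sub hlow
  rw [sub_self] at hlim
  exact hlim.congr' <| (h.eventually_chord_nonempty hU l).mono fun w hw =>
    (h.centre_eq_chordTop_sub (inner_zero_left w) hw).symm

lemma hasLineDerivAt_centre_iff (h : HasSectionCentres K l C) {v : V} {c : ℝ} :
    HasLineDerivAt ℝ C c 0 v ↔ Tendsto (fun t => C (t • v) / t) (𝓝[≠] 0) (𝓝 c) := by
  have hC0 : C 0 = 0 := by
    obtain ⟨k, hk⟩ := (h.eventually_chord_nonempty h.zero_mem_innerShadow l).self_of_nhds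
    rw [h.centre_eq_chordTop_sub (inner_zero_left 0) ⟨k, hk⟩]
    simp [chordTop, chord]
  rw [HasLineDerivAt, hasDerivAt_iff_tendsto_slope_zero]
  simp [hC0, div_eq_inv_mul]

lemma exists_chord_ends (h : HasSectionCentres K l C) {x v : V} (hx : x ∈ innerShadow K)
    (hxv : ⟪x, v⟫ = 0) :
    ∃ k k' : ℝ → ℝ, Tendsto k (𝓝 0) (𝓝 (halfHeight K x)) ∧
      Tendsto k' (𝓝 0) (𝓝 (halfHeight K x)) ∧ ∀ᶠ t in 𝓝 0, C (t • v) = k t - k' t ∧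
        (x + (t * (k t + l)) • v ∈ innerShadow K ∧ halfHeight K (x + (t * (k t + l)) • v) = k t) ∧
        (x + (t * (l - k' t)) • v ∈ innerShadow K ∧
          halfHeight K (x + (t * (l - k' t)) • v) = k' t) := by
  have hup : Tendsto (fun t : ℝ => t • v) (𝓝 0) (𝓝 0) :=
    (continuous_id.smul continuous_const).tendsto' _ _ (zero_smul ℝ v)
  have hdown : Tendsto (fun t : ℝ => -(t • v)) (𝓝 0) (𝓝 0) := by simpa using hup.neg
  refine ⟨_, _, (h.tendsto_chordTop hx l).comp hup, (h.tendsto_chordTop hx (-l)).comp hdown, ?_⟩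
  filter_upwards [hup.eventually (h.eventually_chord_nonempty hx l),
    hup.eventually (h.eventually_halfHeight_chordTop hx l),
    hdown.eventually (h.eventually_halfHeight_chordTop hx (-l))] with t hne htop hbot
  refine ⟨h.centre_eq_chordTop_sub (by rw [inner_smul_right, hxv, mul_zero]) hne, ?_, ?_⟩
  · have hpt (k : ℝ) : x + (t * (k + l)) • v = x + (k + l) • t • v := by module
    simpa only [Function.comp_apply, hpt] using htop
  · have hpt (k : ℝ) : x + (t * (l - k)) • v = x + (k + -l) • -(t • v) := by module
    simpa only [Function.comp_apply, hpt] using hbot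

lemma tendsto_centre_div (h : HasSectionCentres K l C) {x v : V} (hx : x ∈ innerShadow K)
    (hxv : ⟪x, v⟫ = 0) {F : Filter ℝ} (hF : F ≤ 𝓝 0) {D : ℝ → ℝ}
    (hD : ∀ {a : ℝ → ℝ} {a₀ : ℝ}, Tendsto a F (𝓝 a₀) →
      Tendsto (fun t => (halfHeight K (x + (t * a t) • v) - halfHeight K x) / t) F (𝓝 (D a₀))) :
    Tendsto (fun t => C (t • v) / t) F
      (𝓝 (D (halfHeight K x + l) - D (l - halfHeight K x))) := by
  obtain ⟨k, k', hk, hk', hends⟩ := h.exists_chord_ends hx hxv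
  refine ((hD ((hk.mono_left hF).add_const l)).sub (hD ((hk'.mono_left hF).const_sub l))).congr' ?_
  filter_upwards [hF hends] with t ⟨hC, ⟨_, htop⟩, _, hbot⟩
  rw [htop, hbot, hC]
  ring

lemma hasLineDerivAt_centre (h : HasSectionCentres K l C) {x v : V}
    (hx : x ∈ innerShadow K) (hxv : ⟪x, v⟫ = 0) {d : ℝ}
    (hd : HasLineDerivAt ℝ (halfHeight K) d x v) :
    HasLineDerivAt ℝ C (2 * halfHeight K x * d) 0 v := by
  rw [h.hasLineDerivAt_centre_iff]
  convert h.tendsto_centre_div hx hxv nhdsWithin_le_nhds (D := fun a => a * d)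
    fun ha => tendsto_slope_of_hasLineDerivAt hd tendsto_id ha using 2
  ring

lemma hasLineDerivAt_halfHeight (h : HasSectionCentres K l C) {x v : V}
    (hx : x ∈ innerShadow K) (hxv : ⟪x, v⟫ = 0) {c : ℝ} (hc : HasLineDerivAt ℝ C c 0 v) :
    HasLineDerivAt ℝ (halfHeight K) (c / (2 * halfHeight K x)) x v := by
  rw [h.hasLineDerivAt_centre_iff] at hc
  have hT := h.halfHeight_pos hx
  obtain ⟨p, hp⟩ := exists_hasDerivWithinAt_Ici_of_concaveOn h.concaveOn_halfHeight
    isOpen_innerShadow hx v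
  obtain ⟨q, hq⟩ := exists_hasDerivWithinAt_Ici_of_concaveOn h.concaveOn_halfHeight
    isOpen_innerShadow hx (-v)
  have hright := tendsto_nhds_unique (hc.mono_left (nhdsGT_le_nhdsNE 0)) <|
    h.tendsto_centre_div hx hxv nhdsWithin_le_nhds (D := fun a => a⁺ * p + a⁻ * q)
      fun ha => tendsto_slope_of_hasDerivWithinAt_Ici hp hq tendsto_id ha
  have hcneg : Tendsto (fun t => C (t • -v) / t) (𝓝[>] 0) (𝓝 (-c)) := by
    have hreflect : Tendsto (fun t : ℝ => -t) (𝓝[>] 0) (𝓝[<] 0) := by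
      simpa using tendsto_neg_nhdsGT (a := (0 : ℝ))
    exact (hc.comp (hreflect.mono_right (nhdsLT_le_nhdsNE 0))).neg.congr fun t => by simp [div_neg]
  have hleft := tendsto_nhds_unique hcneg <|
    h.tendsto_centre_div hx (by rw [inner_neg_right, hxv, neg_zero]) nhdsWithin_le_nhds
      (D := fun a => a⁺ * q + a⁻ * p)
      fun ha => tendsto_slope_of_hasDerivWithinAt_Ici hq (by simpa using hp) tendsto_id ha
  have hpq : q = -p := by
    have habs : |halfHeight K x + l| ≠ |l - halfHeight K x| := fun habs => by
      have := mul_ne_zero hT.ne' h.offset_ne_zero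
      exact this (by linarith [sq_eq_sq_iff_abs_eq_abs _ _ |>.2 habs])
    have hprod : (|halfHeight K x + l| - |l - halfHeight K x|) * (p + q) = 0 := by
      rw [← posPart_add_negPart, ← posPart_add_negPart]
      linarith
    linarith [(mul_eq_zero.1 hprod).resolve_left (sub_ne_zero.2 habs)]
  have hp_eq : p = c / (2 * halfHeight K x) := by
    rw [eq_div_iff (by positivity)]
    linear_combination -hright - p * posPart_sub_negPart (halfHeight K x + l)
      + p * posPart_sub_negPart (l - halfHeight K x)
      - ((halfHeight K x + l)⁻ - (l - halfHeight K x)⁻) * hpq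
  rw [← hp_eq]
  exact hasLineDerivAt_of_hasDerivWithinAt_Ici hp (hpq ▸ hq)

end HasSectionCentres

end SectionCentres

section CentreDerivative

variable {V : Type*} [NormedAddCommGroup V] [InnerProductSpace ℝ V] [FiniteDimensional ℝ V]
  {K : Set (V × ℝ)} {l : ℝ} {C : V → ℝ}

namespace HasSectionCentres

lemma exists_hasFDerivAt_halfHeight_zero (hV : 2 ≤ Module.finrank ℝ V)
    (h : HasSectionCentres K l C) : ∃ A : V →L[ℝ] ℝ, HasFDerivAt (halfHeight K) A 0 := by
  have hφ := h.concaveOn_halfHeight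
  have h0 := h.zero_mem_innerShadow
  obtain ⟨A, hA⟩ := exists_supergradient_of_concaveOn hφ isOpen_innerShadow
    (hφ.continuousOn isOpen_innerShadow) h0
  refine ⟨A, hasFDerivAt_of_concaveOn_of_closure hφ isOpen_innerShadow h0
    (fun v _ => mem_closure_setOf_inner_eq_zero hV (isOpen_innerShadow.mem_nhds h0)
      (subset_closure_differentiableAt_of_concaveOn hφ isOpen_innerShadow) v) ?_⟩
  rintro w ⟨y, ⟨hy, hdiff⟩, hyw⟩
  have hline := h.hasLineDerivAt_halfHeight h0 (inner_zero_left w)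
    (h.hasLineDerivAt_centre hy hyw (hdiff.hasFDerivAt.hasLineDerivAt w))
  rwa [hasLineDerivAt_eq_of_supergradient isOpen_innerShadow h0 hA hline] at hline

lemma exists_hasLineDerivAt_centre (hV : 2 ≤ Module.finrank ℝ V) (h : HasSectionCentres K l C) :
    ∃ B : V →L[ℝ] ℝ, ∀ v, HasLineDerivAt ℝ C (B v) 0 v := by
  obtain ⟨A, hA⟩ := h.exists_hasFDerivAt_halfHeight_zero hV
  exact ⟨(2 * halfHeight K 0) • A, fun v =>
    h.hasLineDerivAt_centre h.zero_mem_innerShadow (inner_zero_left v) (hA.hasLineDerivAt v)⟩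

end HasSectionCentres

end CentreDerivative

section Circles

variable {V : Type*} [NormedAddCommGroup V] [InnerProductSpace ℝ V]

lemma norm_smul_cos_add_sin_sub_sq {e v : V} (he : ‖e‖ = 1) (hv : ‖v‖ = 1) (hev : ⟪e, v⟫ = 0)
    (ρ r θ : ℝ) : ‖ρ • (Real.cos θ • e + Real.sin θ • v) - r • e‖ ^ 2 =
      ρ ^ 2 + r ^ 2 - 2 * ρ * r * Real.cos θ := by
  have hsplit : ρ • (Real.cos θ • e + Real.sin θ • v) - r • e =
      (ρ * Real.cos θ - r) • e + (ρ * Real.sin θ) • v := by module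
  rw [hsplit, norm_add_sq_real, norm_smul, norm_smul, he, hv, inner_smul_left, inner_smul_right,
    hev, mul_one, mul_one, Real.norm_eq_abs, Real.norm_eq_abs, sq_abs, sq_abs]
  linear_combination ρ ^ 2 * Real.sin_sq_add_cos_sq θ

lemma norm_smul_cos_add_sin_sub_le {e v : V} (he : ‖e‖ = 1) (hv : ‖v‖ = 1) (hev : ⟪e, v⟫ = 0)
    {ρ r s θ : ℝ} (hρ : 0 ≤ ρ) (hr : 0 ≤ r) (hs : 0 ≤ s) (hsθ : s ≤ θ) (hθ : θ ≤ Real.pi) :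
    ‖ρ • (Real.cos s • e + Real.sin s • v) - r • e‖ ≤
      ‖ρ • (Real.cos θ • e + Real.sin θ • v) - r • e‖ := by
  refine le_of_sq_le_sq ?_ (norm_nonneg _)
  rw [norm_smul_cos_add_sin_sub_sq he hv hev, norm_smul_cos_add_sin_sub_sq he hv hev]
  gcongr
  exact Real.cos_le_cos_of_nonneg_of_le_pi hs hθ hsθ

lemma hasDerivAt_smul_cos_add_sin (e v : V) (ρ θ : ℝ) :
    HasDerivAt (fun s => ρ • (Real.cos s • e + Real.sin s • v))
      (ρ • (-Real.sin θ • e + Real.cos θ • v)) θ :=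
  (((Real.hasDerivAt_cos θ).smul_const e).add ((Real.hasDerivAt_sin θ).smul_const v)).const_smul ρ

lemma exists_eq_norm_smul_cos_add_sin [FiniteDimensional ℝ V] (hV : 2 ≤ Module.finrank ℝ V) {e : V}
    (he : ‖e‖ = 1) (y : V) : ∃ v : V, ‖v‖ = 1 ∧ ⟪e, v⟫ = 0 ∧ ∃ θ ∈ Icc 0 Real.pi,
      y = ‖y‖ • (Real.cos θ • e + Real.sin θ • v) := by
  set w := y - ⟪e, y⟫ • e with hw
  have hew : ⟪e, w⟫ = 0 := by
    rw [hw, inner_sub_right, inner_smul_right, real_inner_self_eq_norm_sq, he]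
    ring
  obtain ⟨v, hv, hev, hwv⟩ : ∃ v : V, ‖v‖ = 1 ∧ ⟪e, v⟫ = 0 ∧ w = ‖w‖ • v := by
    rcases eq_or_ne w 0 with h0 | h0
    · obtain ⟨v, hv, hev⟩ := exists_norm_eq_one_inner_eq_zero hV e
      exact ⟨v, hv, hev, by simp [h0]⟩
    · refine ⟨‖w‖⁻¹ • w, norm_smul_inv_norm h0, by simp [inner_smul_right, hew], ?_⟩
      rw [smul_inv_smul₀ (norm_ne_zero_iff.2 h0)]
  have hcos : Real.cos (InnerProductGeometry.angle e y) * ‖y‖ = ⟪e, y⟫ := by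
    simpa [he] using InnerProductGeometry.cos_angle_mul_norm_mul_norm e y
  have hsin : Real.sin (InnerProductGeometry.angle e y) * ‖y‖ = ‖w‖ := by
    have hsq : ‖w‖ ^ 2 = ‖y‖ ^ 2 - ⟪e, y⟫ ^ 2 := by
      rw [hw, norm_sub_sq_real, inner_smul_right, real_inner_comm, norm_smul, he, mul_one,
        Real.norm_eq_abs, sq_abs]
      ring
    have hangle := InnerProductGeometry.sin_angle_mul_norm_mul_norm e y
    rwa [he, one_mul, real_inner_self_eq_norm_sq, he, real_inner_self_eq_norm_sq, one_pow, one_mul,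
      ← sq ⟪e, y⟫, ← hsq, Real.sqrt_sq (norm_nonneg w)] at hangle
  refine ⟨v, hv, hev, _, ⟨InnerProductGeometry.angle_nonneg e y,
    InnerProductGeometry.angle_le_pi e y⟩, ?_⟩
  rw [smul_add, smul_smul, smul_smul, mul_comm, hcos, mul_comm, hsin, ← hwv, hw,
    add_sub_cancel]

end Circles

section ReducedHeight

variable {V : Type*} [NormedAddCommGroup V] [InnerProductSpace ℝ V] [FiniteDimensional ℝ V]
  {K : Set (V × ℝ)} {l : ℝ} {C : V → ℝ} {B : V →L[ℝ] ℝ}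

lemma hasDerivAt_comp_of_hasLineDerivAt_of_concaveOn {E : Type*} [NormedAddCommGroup E]
    [NormedSpace ℝ E] [FiniteDimensional ℝ E] {f : E → ℝ} {U : Set E} (hf : ConcaveOn ℝ U f)
    (hU : IsOpen U) {c : ℝ → E} {c' : E} {a d : ℝ} (ha : c a ∈ U)
    (hd : HasLineDerivAt ℝ f d (c a) c') (hc : HasDerivAt c c' a) :
    HasDerivAt (fun s => f (c s)) d a := by
  obtain ⟨M, g, hg, heq⟩ := exists_lipschitzWith_eventuallyEq_of_concaveOn hf hU ha
  have hshift : Tendsto (fun s : ℝ => s - a) (𝓝 a) (𝓝 0) := tendsto_sub_nhds_zero_iff.2 tendsto_id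
  have htangent : (fun s => g (c a + (s - a) • c') - g (c a) - (s - a) • d) =o[𝓝 a]
      fun s => s - a := by
    simpa [Function.comp_def] using
      (hasDerivAt_iff_isLittleO.1 (heq.hasLineDerivAt_iff.2 hd)).comp_tendsto hshift
  have hcurve : (fun s => g (c s) - g (c a + (s - a) • c')) =o[𝓝 a] fun s => s - a := by
    refine Asymptotics.IsBigO.trans_isLittleO ?_ (hasDerivAt_iff_isLittleO.1 hc)
    refine Asymptotics.IsBigO.of_bound M (Eventually.of_forall fun s => ?_)
    simpa [sub_sub] using hg.norm_sub_le (c s) (c a + (s - a) • c')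
  have hgc : HasDerivAt (fun s => g (c s)) d a := by
    rw [hasDerivAt_iff_isLittleO]
    exact (hcurve.add htangent).congr_left fun s => by ring
  exact hgc.congr_of_eventuallyEq (hc.continuousAt.eventually heq.symm)

/-- The squared half-height of `K` with a linear term removed. For the derivative `B` of the
section centres at `0` it turns out to be a function of the norm. -/
def reducedSqHeight (K : Set (V × ℝ)) (B : V →L[ℝ] ℝ) (y : V) : ℝ := halfHeight K y ^ 2 - B y

namespace HasSectionCentres

lemma hasDerivAt_reducedSqHeight_comp (h : HasSectionCentres K l C)
    (hB : ∀ v, HasLineDerivAt ℝ C (B v) 0 v) {c : ℝ → V} {c' : V} {a : ℝ}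
    (ha : c a ∈ innerShadow K) (hc : HasDerivAt c c' a) (horth : ⟪c a, c'⟫ = 0) :
    HasDerivAt (fun s => reducedSqHeight K B (c s)) 0 a := by
  have hheight := hasDerivAt_comp_of_hasLineDerivAt_of_concaveOn h.concaveOn_halfHeight
    isOpen_innerShadow ha (h.hasLineDerivAt_halfHeight ha horth (hB c')) hc
  refine ((hheight.pow 2).sub (B.hasFDerivAt.comp_hasDerivAt a hc)).congr_deriv ?_
  have := (h.halfHeight_pos ha).ne'
  simp only [Nat.cast_ofNat, Nat.add_one_sub_one, pow_one]
  field_simp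
  ring

lemma reducedSqHeight_eq_of_closedBall_subset (h : HasSectionCentres K l C)
    (hV : 2 ≤ Module.finrank ℝ V) (hB : ∀ v, HasLineDerivAt ℝ C (B v) 0 v) {e y : V} {r : ℝ}
    (he : ‖e‖ = 1) (hr : 0 ≤ r) (hball : closedBall (r • e) ‖y - r • e‖ ⊆ innerShadow K) :
    reducedSqHeight K B y = reducedSqHeight K B (‖y‖ • e) := by
  obtain ⟨v, hv, hev, θ, ⟨hθ0, hθ⟩, hy⟩ := exists_eq_norm_smul_cos_add_sin hV he y
  set c : ℝ → V := fun s => ‖y‖ • (Real.cos s • e + Real.sin s • v) with hc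
  have hderiv : ∀ s ∈ Icc 0 θ, HasDerivAt (fun s => reducedSqHeight K B (c s)) 0 s := by
    intro s hs
    refine h.hasDerivAt_reducedSqHeight_comp hB (hball ?_)
      (hasDerivAt_smul_cos_add_sin e v ‖y‖ s) ?_
    · rw [mem_closedBall_iff_norm]
      exact (norm_smul_cos_add_sin_sub_le he hv hev (norm_nonneg y) hr hs.1 hs.2 hθ).trans_eq
        (by rw [← hy])
    · simp only [hc, inner_smul_left, inner_smul_right, inner_add_left, inner_add_right, hev,
        real_inner_comm e v, real_inner_self_eq_norm_sq, he, hv, conj_trivial]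
      ring
  have hconst := constant_of_has_deriv_right_zero
    (fun s hs => (hderiv s hs).continuousAt.continuousWithinAt)
    (fun s hs => (hderiv s (Ico_subset_Icc_self hs)).hasDerivWithinAt) θ ⟨hθ0, le_rfl⟩
  simpa only [hc, ← hy, Real.cos_zero, Real.sin_zero, one_smul, zero_smul, add_zero] using hconst

end HasSectionCentres

end ReducedHeight

section Paraboloid

lemma eq_of_hasDerivWithinAt_Ici_zero {g : ℝ → ℝ} {a b : ℝ} (hab : a ≤ b)
    (hcont : ContinuousOn g (Icc a b))
    (hderiv : ∀ x ∈ Ioo a b, HasDerivWithinAt g 0 (Ici x) x) : g b = g a := by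
  rcases hab.eq_or_lt with rfl | hlt
  · rfl
  have hconst : ∀ x ∈ Ioo a b, g b = g x := fun x hx =>
    constant_of_has_deriv_right_zero (hcont.mono (Icc_subset_Icc_left hx.1.le))
      (fun y hy => hderiv y ⟨hx.1.trans_le hy.1, hy.2⟩) b ⟨hx.2.le, le_rfl⟩
  have hlim : Tendsto g (𝓝[>] a) (𝓝 (g a)) :=
    ((hcont a ⟨le_rfl, hab⟩).mono_of_mem_nhdsWithin
      (mem_of_superset (Ioo_mem_nhdsGT hlt) Ioo_subset_Icc_self))
  exact tendsto_nhds_unique (tendsto_const_nhds.congr'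
    (mem_of_superset (Ioo_mem_nhdsGT hlt) hconst)) hlim

variable {V : Type*} [NormedAddCommGroup V] [InnerProductSpace ℝ V] {K : Set (V × ℝ)} {l : ℝ}
  {C : V → ℝ} {B : V →L[ℝ] ℝ}

namespace HasSectionCentres

lemma sqrt_smul_mem_innerShadow (h : HasSectionCentres K l C) {e : V} {ρ s : ℝ} (hρ : 0 < ρ)
    (hU : ρ • e ∈ innerShadow K) (hs : s ≤ ρ ^ 2) : √s • e ∈ innerShadow K := by
  have := h.convex_innerShadow.smul_mem_of_zero_mem h.zero_mem_innerShadow hU (t := √s / ρ)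
    ⟨by positivity, div_le_one_of_le₀ (Real.sqrt_le_iff.2 ⟨hρ.le, hs⟩) hρ.le⟩
  rwa [smul_smul, div_mul_cancel₀ _ hρ.ne'] at this

lemma exists_hasDerivWithinAt_reducedSqHeight_sqrt (h : HasSectionCentres K l C)
    (B : V →L[ℝ] ℝ) {e : V} {s : ℝ} (hs : 0 < s) (hU : √s • e ∈ innerShadow K) :
    ∃ d, HasDerivWithinAt (fun σ => reducedSqHeight K B (√σ • e)) d (Ici s) s := by
  obtain ⟨p, hp⟩ := exists_hasDerivWithinAt_Ici_of_concaveOn h.concaveOn_halfHeight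
    isOpen_innerShadow hU e
  have hsqrt : HasDerivWithinAt (fun σ => √σ) (1 / (2 * √s)) (Ici s) s :=
    (Real.hasDerivAt_sqrt hs.ne').hasDerivWithinAt
  have hheight : HasDerivWithinAt (fun σ => halfHeight K (√σ • e)) (p * (1 / (2 * √s)))
      (Ici s) s := by
    have hcomp := HasDerivWithinAt.comp (h₂ := fun t : ℝ => halfHeight K (√s • e + t • e))
      (h := fun σ => √σ - √s) (s' := Ici 0) s (by simpa using hp) (hsqrt.sub_const _)
      fun σ hσ => by simpa using Real.sqrt_le_sqrt hσ
    refine hcomp.congr_of_mem (fun σ _ => ?_) self_mem_Ici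
    simp only [Function.comp_apply, ← add_smul, add_sub_cancel]
  exact ⟨_, (hheight.pow 2).sub (B.hasFDerivAt.comp_hasDerivWithinAt s (hsqrt.smul_const e))⟩

variable [FiniteDimensional ℝ V]

lemma eventually_reducedSqHeight_add_smul (h : HasSectionCentres K l C)
    (hV : 2 ≤ Module.finrank ℝ V) (hB : ∀ v, HasLineDerivAt ℝ C (B v) 0 v) {e v : V}
    (he : ‖e‖ = 1) (hv : ‖v‖ = 1) (hev : ⟪e, v⟫ = 0) {s : ℝ} (hs : 0 ≤ s)
    (hU : √s • e ∈ innerShadow K) :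
    ∀ᶠ a : ℝ in 𝓝 0,
      reducedSqHeight K B (√s • e + a • v) = reducedSqHeight K B (√(s + a ^ 2) • e) := by
  obtain ⟨R, hR, hball⟩ := Metric.isOpen_iff.1 isOpen_innerShadow _ hU
  filter_upwards [ball_mem_nhds (0 : ℝ) hR] with a ha
  have hnorm : ‖√s • e + a • v‖ = √(s + a ^ 2) := by
    rw [norm_add_eq_sqrt_iff_real_inner_eq_zero.2
        (by simp [inner_smul_left, inner_smul_right, hev]),
      norm_smul, norm_smul, he, hv, Real.norm_eq_abs, Real.norm_eq_abs, mul_one, mul_one,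
      abs_mul_abs_self, abs_mul_abs_self, Real.mul_self_sqrt hs, sq]
  rw [← hnorm]
  refine h.reducedSqHeight_eq_of_closedBall_subset hV hB he (Real.sqrt_nonneg s)
    ((closedBall_subset_ball ?_).trans hball)
  simpa [norm_smul, hv] using ha

lemma exists_chord_ends_radial (h : HasSectionCentres K l C) (hV : 2 ≤ Module.finrank ℝ V)
    (hB : ∀ v, HasLineDerivAt ℝ C (B v) 0 v) {e v : V} (he : ‖e‖ = 1) (hv : ‖v‖ = 1)
    (hev : ⟪e, v⟫ = 0) {s : ℝ} (hs : 0 ≤ s) (hU : √s • e ∈ innerShadow K) :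
    ∃ k k' : ℝ → ℝ, Tendsto k (𝓝 0) (𝓝 (halfHeight K (√s • e))) ∧
      Tendsto k' (𝓝 0) (𝓝 (halfHeight K (√s • e))) ∧
      ∀ᶠ t in 𝓝 0, (C (t • v) - t * B v) * (k t + k' t) =
        reducedSqHeight K B (√(s + t ^ 2 * (k t + l) ^ 2) • e) -
          reducedSqHeight K B (√(s + t ^ 2 * (l - k' t) ^ 2) • e) := by
  obtain ⟨k, k', hk, hk', hends⟩ := h.exists_chord_ends hU (v := v) (by simp [inner_smul_left, hev])
  have hradial {a : ℝ → ℝ} {a₀ : ℝ} (ha : Tendsto a (𝓝 0) (𝓝 a₀)) :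
      ∀ᶠ t in 𝓝 0, reducedSqHeight K B (√s • e + (t * a t) • v) =
        reducedSqHeight K B (√(s + (t * a t) ^ 2) • e) := by
    have hzero : Tendsto (fun t => t * a t) (𝓝 0) (𝓝 0) := by
      simpa using (tendsto_id (x := 𝓝 (0 : ℝ))).mul ha
    exact hzero.eventually (h.eventually_reducedSqHeight_add_smul hV hB he hv hev hs hU)
  refine ⟨k, k', hk, hk', ?_⟩
  filter_upwards [hends, hradial (hk.add_const l), hradial (hk'.const_sub l)]
    with t ⟨hC, ⟨_, htop⟩, _, hbot⟩ hrtop hrbot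
  rw [← mul_pow, ← mul_pow, ← hrtop, ← hrbot, reducedSqHeight, reducedSqHeight, htop, hbot, hC]
  simp only [map_add, map_smul, smul_eq_mul]
  ring

lemma tendsto_centre_sub_div_sq (h : HasSectionCentres K l C) (hV : 2 ≤ Module.finrank ℝ V)
    (hB : ∀ v, HasLineDerivAt ℝ C (B v) 0 v) {e v : V} (he : ‖e‖ = 1) (hv : ‖v‖ = 1)
    (hev : ⟪e, v⟫ = 0) {s d : ℝ} (hs : 0 ≤ s) (hU : √s • e ∈ innerShadow K)
    (hd : HasDerivWithinAt (fun σ => reducedSqHeight K B (√σ • e)) d (Ici s) s) :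
    Tendsto (fun t => (C (t • v) - t * B v) / t ^ 2) (𝓝[≠] 0) (𝓝 (2 * l * d)) := by
  obtain ⟨k, k', hk, hk', hends⟩ := h.exists_chord_ends_radial hV hB he hv hev hs hU
  set T := halfHeight K (√s • e)
  have hT : 0 < T := h.halfHeight_pos hU
  have hsq : Tendsto (fun t : ℝ => t ^ 2) (𝓝[≠] 0) (𝓝[≠] 0) :=
    tendsto_nhdsWithin_iff.2 ⟨((continuous_pow 2).tendsto' (0 : ℝ) 0 (by simp)).mono_left
      nhdsWithin_le_nhds, eventually_mem_nhdsWithin.mono fun t ht => pow_ne_zero 2 ht⟩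
  have hslope {a : ℝ → ℝ} {a₀ : ℝ} (ha : Tendsto a (𝓝 0) (𝓝 a₀)) :=
    tendsto_slope_of_hasDerivWithinAt hd hsq ((ha.pow 2).mono_left nhdsWithin_le_nhds)
      (Eventually.of_forall fun t => by simpa using by positivity)
  have hsum : Tendsto (fun t => k t + k' t) (𝓝[≠] 0) (𝓝 (T + T)) :=
    (hk.add hk').mono_left nhdsWithin_le_nhds
  have hlim := ((hslope (hk.add_const l)).sub (hslope (hk'.const_sub l))).div hsum (by positivity)
  have hval : ((T + l) ^ 2 * d - (l - T) ^ 2 * d) / (T + T) = 2 * l * d := by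
    field_simp
    ring
  rw [hval] at hlim
  refine hlim.congr' ?_
  filter_upwards [nhdsWithin_le_nhds hends, hsum.eventually_ne (by positivity)] with t hends hne
  rw [Pi.div_apply, ← sub_div, sub_sub_sub_cancel_right, ← hends, div_right_comm,
    mul_div_cancel_right₀ _ hne]

lemma exists_forall_hasDerivWithinAt_reducedSqHeight_sqrt (h : HasSectionCentres K l C)
    (hV : 2 ≤ Module.finrank ℝ V) (hB : ∀ v, HasLineDerivAt ℝ C (B v) 0 v) {e : V}
    (he : ‖e‖ = 1) : ∃ m, ∀ s > 0, √s • e ∈ innerShadow K →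
      HasDerivWithinAt (fun σ => reducedSqHeight K B (√σ • e)) m (Ici s) s := by
  obtain ⟨v, hv, hev⟩ := exists_norm_eq_one_inner_eq_zero hV e
  obtain ⟨s₀, hU₀, hs₀⟩ : ∃ s₀, √s₀ • e ∈ innerShadow K ∧ 0 < s₀ := by
    have hcont : Continuous fun s => √s • e := by fun_prop
    have hnear : ∀ᶠ s in 𝓝[>] 0, √s • e ∈ innerShadow K :=
      nhdsWithin_le_nhds (hcont.continuousAt.eventually_mem
        (isOpen_innerShadow.mem_nhds (by simpa using h.zero_mem_innerShadow)))
    exact (hnear.and eventually_mem_nhdsWithin).exists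
  obtain ⟨m, hm⟩ := h.exists_hasDerivWithinAt_reducedSqHeight_sqrt B hs₀ hU₀
  refine ⟨m, fun s hs hU => ?_⟩
  obtain ⟨d, hd⟩ := h.exists_hasDerivWithinAt_reducedSqHeight_sqrt B hs hU
  have heq := tendsto_nhds_unique
    (h.tendsto_centre_sub_div_sq hV hB he hv hev hs.le hU hd)
    (h.tendsto_centre_sub_div_sq hV hB he hv hev hs₀.le hU₀ hm)
  rwa [mul_left_cancel₀ (mul_ne_zero two_ne_zero h.offset_ne_zero) heq] at hd

lemma exists_reducedSqHeight_smul_eq (h : HasSectionCentres K l C) (hV : 2 ≤ Module.finrank ℝ V)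
    (hB : ∀ v, HasLineDerivAt ℝ C (B v) 0 v) {e : V} (he : ‖e‖ = 1) :
    ∃ m, ∀ ρ > 0, ρ • e ∈ innerShadow K →
      reducedSqHeight K B (ρ • e) = reducedSqHeight K B 0 + m * ρ ^ 2 := by
  obtain ⟨m, hm⟩ := h.exists_forall_hasDerivWithinAt_reducedSqHeight_sqrt hV hB he
  refine ⟨m, fun ρ hρ hU => ?_⟩
  have hmem : ∀ s ≤ ρ ^ 2, √s • e ∈ innerShadow K := fun s => h.sqrt_smul_mem_innerShadow hρ hU
  have hcont : ContinuousOn (fun s => reducedSqHeight K B (√s • e) - m * s) (Icc 0 (ρ ^ 2)) := by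
    have hray : ContinuousOn (fun s => halfHeight K (√s • e)) (Icc 0 (ρ ^ 2)) :=
      (h.concaveOn_halfHeight.continuousOn isOpen_innerShadow).comp (by fun_prop)
        fun s hs => hmem s hs.2
    unfold reducedSqHeight
    fun_prop
  have hconst := eq_of_hasDerivWithinAt_Ici_zero (sq_nonneg ρ) hcont fun s hs =>
    ((hm s hs.1 (hmem s hs.2.le)).sub
      ((hasDerivAt_id s).const_mul m).hasDerivWithinAt).congr_deriv (by simp)
  simp only [Real.sqrt_sq hρ.le, Real.sqrt_zero, zero_smul, mul_zero, sub_zero] at hconst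
  linarith

lemma exists_halfHeight_sq_eq (h : HasSectionCentres K l C) (hV : 2 ≤ Module.finrank ℝ V) :
    ∃ (B : V →L[ℝ] ℝ) (γ : ℝ), ∀ y ∈ innerShadow K,
      halfHeight K y ^ 2 = halfHeight K 0 ^ 2 + B y - γ * ‖y‖ ^ 2 := by
  obtain ⟨B, hB⟩ := h.exists_hasLineDerivAt_centre hV
  obtain ⟨e, he, -⟩ := exists_norm_eq_one_inner_eq_zero hV 0
  obtain ⟨m, hm⟩ := h.exists_reducedSqHeight_smul_eq hV hB he
  refine ⟨B, -m, fun y hy => ?_⟩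
  suffices hred : reducedSqHeight K B y = reducedSqHeight K B 0 + m * ‖y‖ ^ 2 by
    simp only [reducedSqHeight, map_zero] at hred
    linarith
  rcases eq_or_ne y 0 with rfl | hy0
  · simp
  have he' : ‖‖y‖⁻¹ • y‖ = 1 := norm_smul_inv_norm hy0
  obtain ⟨m', hm'⟩ := h.exists_reducedSqHeight_smul_eq hV hB he'
  obtain ⟨R, hR, hball⟩ := nhds_basis_closedBall.mem_iff.1
    (isOpen_innerShadow.mem_nhds h.zero_mem_innerShadow)
  have hnorm {e : V} (he : ‖e‖ = 1) : ‖R • e‖ = R := by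
    rw [norm_smul, he, mul_one, Real.norm_of_nonneg hR.le]
  have hmem {e : V} (he : ‖e‖ = 1) : R • e ∈ innerShadow K := hball (by simp [hnorm he])
  have hmm' : m' = m := by
    have hsphere := h.reducedSqHeight_eq_of_closedBall_subset hV hB (y := R • ‖y‖⁻¹ • y) he
      le_rfl (by rwa [zero_smul, sub_zero, hnorm he'])
    rw [hnorm he', hm' R hR (hmem he'), hm R hR (hmem he)] at hsphere
    exact mul_right_cancel₀ (by positivity) (add_left_cancel hsphere)
  have hy' : ‖y‖ • ‖y‖⁻¹ • y = y := smul_inv_smul₀ (norm_ne_zero_iff.2 hy0) y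
  simpa only [hy', hmm'] using hm' ‖y‖ (norm_pos_iff.2 hy0) (by rwa [hy'])

end HasSectionCentres

end Paraboloid

section SupportingHyperplanes

lemma mem_of_forall_Ioo_smul_mem {E : Type*} [TopologicalSpace E] [AddCommGroup E] [Module ℝ E]
    [ContinuousSMul ℝ E] {s : Set E} (hs : IsClosed s) {x : E}
    (hx : ∀ t ∈ Ioo (0 : ℝ) 1, t • x ∈ s) : x ∈ s := by
  have hlim : Tendsto (fun t : ℝ => t • x) (𝓝[<] 1) (𝓝 x) :=
    ((continuous_id.smul continuous_const).tendsto' 1 x (one_smul ℝ x)).mono_left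
      nhdsWithin_le_nhds
  exact hs.mem_of_tendsto hlim <| mem_of_superset (Ioo_mem_nhdsLT one_pos) hx

namespace IsVerticallySymmetricBody

variable {V : Type*} [NormedAddCommGroup V] [NormedSpace ℝ V] {K : Set (V × ℝ)} {y : V} {k : ℝ}

lemma smul_mem_innerShadow (h : IsVerticallySymmetricBody K) (hy : (y, k) ∈ K) {t : ℝ}
    (ht : t ∈ Ico (0 : ℝ) 1) : t • y ∈ innerShadow K := by
  have := h.convex.combo_interior_self_mem_interior h.zero_mem_interior (h.mk_zero_mem hy)
    (sub_pos.2 ht.2) ht.1 (sub_add_cancel 1 t)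
  simpa [innerShadow] using this

lemma exists_mk_mem_mul_add_neg (h : IsVerticallySymmetricBody K) (hy : (y, k) ∈ K) (hk : k ≠ 0)
    {l : ℝ} (hl : l ≠ 0) : ∃ m, (y, m) ∈ K ∧ m * (m + l) < 0 := by
  have hδ : 0 < min (1 / 2) (|k| / |l|) := by positivity
  have hδ' : min (1 / 2) (|k| / |l|) ≤ 1 / 2 := min_le_left _ _
  refine ⟨-min (1 / 2) (|k| / |l|) * l, h.mem_of_abs_le_halfHeight hy ?_, ?_⟩
  · rw [abs_mul, abs_neg, abs_of_pos hδ]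
    exact ((le_div_iff₀ (abs_pos.2 hl)).1 (min_le_right _ _)).trans (h.abs_le_halfHeight hy)
  · nlinarith [mul_pos (mul_pos hδ (by linarith : 0 < 1 - min (1 / 2) (|k| / |l|)))
      (sq_pos_of_ne_zero hl)]

end IsVerticallySymmetricBody

namespace HasSectionCentres

variable {V : Type*} [NormedAddCommGroup V] [InnerProductSpace ℝ V] {K : Set (V × ℝ)} {l : ℝ}
  {C : V → ℝ} {N : V →L[ℝ] ℝ} {y₀ : V} {k : ℝ}

lemma sub_mul_map_nonpos (h : HasSectionCentres K l C) (hN : ∀ z ∈ K, N z.1 ≤ N y₀)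
    (hk : (y₀, k) ∈ K) {w : V} (hw : ⟪y₀, w⟫ = (k + l) * ‖w‖ ^ 2) :
    (C w - 2 * k) * N w ≤ 0 := by
  have hle := hN _ <| h.reflect_mem (w := w) (x := y₀ - (k + l) • w) (k := k)
    (by rw [inner_sub_left, hw, real_inner_smul_left, real_inner_self_eq_norm_sq, sub_self])
    (by simpa using hk)
  simp only [map_add, map_sub, map_smul, smul_eq_mul] at hle
  linarith

lemma exists_tendsto_sub_mul_map_nonpos (h : HasSectionCentres K l C)
    (hN : ∀ z ∈ K, N z.1 ≤ N y₀) (hk : (y₀, k) ∈ K) (hy₀ : y₀ ≠ 0) {v : V} (hv : ‖v‖ = 1)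
    (hyv : ⟪y₀, v⟫ = 0) :
    ∃ c : ℝ → ℝ, Tendsto c (𝓝[>] 0) (𝓝 0) ∧
      ∀ᶠ δ in 𝓝[>] 0, (c δ - 2 * k) * (N v + δ * ((k + l) * N y₀)) ≤ 0 := by
  set a : ℝ → V := fun δ => v + (δ * (k + l)) • y₀ with ha
  set r : ℝ → ℝ := fun δ => δ * ‖y₀‖ ^ 2 / ‖a δ‖ ^ 2 with hr
  have hcont : Continuous a := by fun_prop
  have ha0 : ‖a 0‖ ^ 2 = 1 := by simp [ha, hv]
  have hr0 : ContinuousAt r 0 := by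
    refine ContinuousAt.div ?_ ?_ ?_
    · fun_prop
    · fun_prop
    · rw [ha0]; exact one_ne_zero
  have hlim : Tendsto (fun δ => r δ • a δ) (𝓝[>] 0) (𝓝 0) := by
    have := (hr0.smul hcont.continuousAt).tendsto.mono_left (nhdsWithin_le_nhds (s := Ioi 0))
    rwa [Pi.smul_apply', show r 0 = 0 by simp [hr], zero_smul] at this
  refine ⟨fun δ => C (r δ • a δ), h.tendsto_centre.comp hlim, ?_⟩
  have hane : ∀ᶠ δ in 𝓝[>] 0, ‖a δ‖ ≠ 0 :=
    nhdsWithin_le_nhds <| hcont.norm.continuousAt.eventually_ne (by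
      intro h0; simp [h0] at ha0)
  filter_upwards [hane, self_mem_nhdsWithin] with δ haδ hδ
  have hrpos : 0 < r δ := by
    have : 0 < ‖y₀‖ := norm_pos_iff.2 hy₀
    have : 0 < δ := hδ
    positivity
  have hinner : ⟪y₀, r δ • a δ⟫ = (k + l) * ‖r δ • a δ‖ ^ 2 := by
    rw [norm_smul, mul_pow, Real.norm_eq_abs, sq_abs, real_inner_smul_right, inner_add_right, hyv,
      real_inner_smul_right, real_inner_self_eq_norm_sq]
    simp only [hr]
    field_simp
    ring
  have hle := h.sub_mul_map_nonpos hN hk hinner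
  simp only [ha, map_add, map_smul, smul_eq_mul] at hle
  refine nonpos_of_mul_nonpos_right (a := r δ) ?_ hrpos
  linarith

-- Otherwise a vertical hyperplane with normal `N` supports `K` at `(y₀, k)`. Letting the direction
-- of the sections tend to `0` gives `N v = 0` for all `v ⟂ y₀` to leading order, and the next order
-- contradicts the choice of `m`.
lemma mem_innerShadow_of_mem [FiniteDimensional ℝ V] (h : HasSectionCentres K l C)
    (hV : 2 ≤ Module.finrank ℝ V) (hk : (y₀, k) ∈ K) (hk0 : k ≠ 0) : y₀ ∈ innerShadow K := by
  by_contra hy₀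
  obtain ⟨N, hN⟩ := geometric_hahn_banach_open_point h.convex_innerShadow isOpen_innerShadow hy₀
  have hN0 : 0 < N y₀ := by simpa using hN 0 h.zero_mem_innerShadow
  have hmax : ∀ z ∈ K, N z.1 ≤ N y₀ := fun z hz =>
    mem_of_forall_Ioo_smul_mem (isClosed_le N.continuous continuous_const) fun t ht =>
      (hN _ (h.smul_mem_innerShadow hz ⟨ht.1.le, ht.2⟩)).le
  obtain ⟨m, hm, hmneg⟩ := h.exists_mk_mem_mul_add_neg hk hk0 h.offset_ne_zero
  have hne : y₀ ≠ 0 := fun h0 => hy₀ (h0 ▸ h.zero_mem_innerShadow)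
  have hlim {v : V} (hv : ‖v‖ = 1) (hyv : ⟪y₀, v⟫ = 0) : -(2 * m) * N v ≤ 0 := by
    obtain ⟨c, hc, hle⟩ := h.exists_tendsto_sub_mul_map_nonpos hmax hm hne hv hyv
    have hcont : Tendsto (fun δ => N v + δ * ((m + l) * N y₀)) (𝓝[>] 0) (𝓝 (N v)) :=
      (Continuous.tendsto' (by fun_prop) _ _ (by simp)).mono_left nhdsWithin_le_nhds
    simpa using le_of_tendsto ((hc.sub_const (2 * m)).mul hcont) hle
  obtain ⟨v, hv, hyv⟩ := exists_norm_eq_one_inner_eq_zero hV y₀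
  have hNv : m * N v = 0 := by
    have hneg := hlim (v := -v) (by rwa [norm_neg]) (by rw [inner_neg_right, hyv, neg_zero])
    rw [map_neg] at hneg
    linarith [hlim hv hyv]
  replace hNv : N v = 0 := (mul_eq_zero.1 hNv).resolve_left (by rintro rfl; simp at hmneg)
  obtain ⟨c, hc, hle⟩ := h.exists_tendsto_sub_mul_map_nonpos hmax hm hne hv hyv
  have hle' : (0 - 2 * m) * (m + l) ≤ 0 := by
    refine le_of_tendsto ((hc.sub_const (2 * m)).mul_const (m + l)) ?_
    filter_upwards [hle, self_mem_nhdsWithin] with δ hleδ (hδ : 0 < δ)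
    rw [hNv, zero_add] at hleδ
    refine nonpos_of_mul_nonpos_right (a := δ * N y₀) ?_ (mul_pos hδ hN0)
    linarith
  linarith

end HasSectionCentres

end SupportingHyperplanes

section QuadraticBodies

variable {V : Type*} [NormedAddCommGroup V] [InnerProductSpace ℝ V] [FiniteDimensional ℝ V]
  {K : Set (V × ℝ)} {l : ℝ} {C : V → ℝ}

namespace HasSectionCentres

lemma mem_innerShadow_of_forall_smul_pos (h : HasSectionCentres K l C)
    (hV : 2 ≤ Module.finrank ℝ V) {q : V → ℝ} (hq : Continuous q)
    (hheight : ∀ y ∈ innerShadow K, halfHeight K y ^ 2 = q y) {y : V}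
    (hpos : ∀ t ∈ Icc (0 : ℝ) 1, 0 < q (t • y)) : y ∈ innerShadow K := by
  have hray : Continuous fun t : ℝ => t • y := by fun_prop
  have hset : {t : ℝ | t • y ∈ innerShadow K} ∩ Icc 0 1 =
      {t : ℝ | (t • y, √(q (t • y))) ∈ K} ∩ Icc 0 1 := by
    ext t
    refine and_congr_left fun ht => ⟨fun hy => ?_, fun hy =>
      h.mem_innerShadow_of_mem hV hy (Real.sqrt_pos.2 (hpos t ht)).ne'⟩
    rw [mem_ofPred_eq, ← hheight _ hy, Real.sqrt_sq (h.halfHeight_pos hy).le]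
    exact h.mk_halfHeight_mem (interior_subset (s := K) hy)
  have hclosed : IsClosed ({t : ℝ | t • y ∈ innerShadow K} ∩ Icc 0 1) := by
    rw [hset]
    exact (h.isCompact.isClosed.preimage (by fun_prop)).inter isClosed_Icc
  have hsub := hclosed.Icc_subset_of_forall_mem_nhdsWithin
    (by simpa using h.zero_mem_innerShadow) fun t ht =>
      nhdsWithin_le_nhds ((isOpen_innerShadow.preimage hray).mem_nhds ht.1)
  simpa using hsub (right_mem_Icc.2 zero_le_one)

lemma coeff_pos_of_halfHeight_sq_eq (h : HasSectionCentres K l C) (hV : 2 ≤ Module.finrank ℝ V)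
    {α γ : ℝ} {B : V →L[ℝ] ℝ} (hα : 0 < α)
    (hheight : ∀ y ∈ innerShadow K, halfHeight K y ^ 2 = α + B y - γ * ‖y‖ ^ 2) : 0 < γ := by
  by_contra! hγ
  obtain ⟨v, hv, hBv⟩ := exists_norm_eq_one_inner_eq_zero hV ((InnerProductSpace.toDual ℝ V).symm B)
  rw [InnerProductSpace.toDual_symm_apply] at hBv
  obtain ⟨M, hM⟩ := h.isCompact.isBounded.exists_norm_le
  have hmem : (|M| + 1) • v ∈ innerShadow K := by
    refine h.mem_innerShadow_of_forall_smul_pos hV (by fun_prop) hheight fun t _ => ?_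
    have : γ * ‖t • (|M| + 1) • v‖ ^ 2 ≤ 0 := mul_nonpos_of_nonpos_of_nonneg hγ (sq_nonneg _)
    simp only [map_smul, hBv, smul_zero, add_zero]
    linarith
  have hle := (le_max_left _ _).trans (hM _ (interior_subset (s := K) hmem))
  rw [norm_smul, hv, mul_one, Real.norm_of_nonneg (by positivity)] at hle
  linarith [le_abs_self M]

lemma mem_iff_of_halfHeight_sq_eq (h : HasSectionCentres K l C) (hV : 2 ≤ Module.finrank ℝ V)
    {α γ : ℝ} {B : V →L[ℝ] ℝ} (hα : 0 < α)
    (hheight : ∀ y ∈ innerShadow K, halfHeight K y ^ 2 = α + B y - γ * ‖y‖ ^ 2) (y : V) (k : ℝ) :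
    (y, k) ∈ K ↔ k ^ 2 ≤ α + B y - γ * ‖y‖ ^ 2 := by
  have hγ := h.coeff_pos_of_halfHeight_sq_eq hV hα hheight
  constructor <;> intro hyk
  · have hclosed : IsClosed {z : V × ℝ | z.2 ^ 2 ≤ α + B z.1 - γ * ‖z.1‖ ^ 2} :=
      isClosed_le (by fun_prop) (by fun_prop)
    refine mem_of_forall_Ioo_smul_mem hclosed (x := (y, k)) fun t ht => ?_
    have htK : t • (y, k) ∈ K := h.convex.smul_mem_of_zero_mem
      (interior_subset h.zero_mem_interior) hyk ⟨ht.1.le, ht.2.le⟩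
    rw [mem_ofPred_eq, Prod.smul_fst, Prod.smul_snd,
      ← hheight _ (h.smul_mem_innerShadow hyk ⟨ht.1.le, ht.2⟩)]
    exact sq_le_sq.2 ((h.abs_le_halfHeight htK).trans (le_abs_self _))
  have hconcave {t : ℝ} (ht : t ∈ Icc (0 : ℝ) 1) :
      (1 - t) * α + t * k ^ 2 ≤ α + B (t • y) - γ * ‖t • y‖ ^ 2 := by
    rw [map_smul, norm_smul, smul_eq_mul, mul_pow, Real.norm_eq_abs, sq_abs]
    have : 0 ≤ γ * ‖y‖ ^ 2 * (t * (1 - t)) :=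
      mul_nonneg (by positivity) (mul_nonneg ht.1 (sub_nonneg.2 ht.2))
    linarith [mul_le_mul_of_nonneg_left hyk ht.1]
  refine mem_of_forall_Ioo_smul_mem h.isCompact.isClosed fun t ht => ?_
  have hty : t • y ∈ innerShadow K := by
    refine h.mem_innerShadow_of_forall_smul_pos hV (by fun_prop) hheight fun τ hτ => ?_
    have hτt : τ * t < 1 := (mul_le_of_le_one_left ht.1.le hτ.2).trans_lt ht.2
    rw [smul_smul]
    refine lt_of_lt_of_le ?_ (hconcave ⟨mul_nonneg hτ.1 ht.1.le, hτt.le⟩)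
    exact add_pos_of_pos_of_nonneg (mul_pos (sub_pos.2 hτt) hα)
      (mul_nonneg (mul_nonneg hτ.1 ht.1.le) (sq_nonneg k))
  refine h.mem_of_abs_le_halfHeight (interior_subset (s := K) hty)
    (abs_le_of_sq_le_sq ?_ (h.halfHeight_pos hty).le)
  calc (t * k) ^ 2 = t * (t * k ^ 2) := by ring
    _ ≤ t * k ^ 2 := mul_le_of_le_one_left (mul_nonneg ht.1.le (sq_nonneg k)) ht.2.le
    _ ≤ (1 - t) * α + t * k ^ 2 := le_add_of_nonneg_left (mul_nonneg (sub_pos.2 ht.2).le hα.le)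
    _ ≤ halfHeight K (t • y) ^ 2 := (hconcave ⟨ht.1.le, ht.2.le⟩).trans_eq (hheight _ hty).symm

end HasSectionCentres

lemma exists_add_apply_sub_mul_norm_sq_eq {V : Type*} [NormedAddCommGroup V]
    [InnerProductSpace ℝ V] [CompleteSpace V] (B : V →L[ℝ] ℝ) {α γ : ℝ} (hα : 0 < α) (hγ : 0 < γ) :
    ∃ (a : V) (ρ : ℝ), 0 < ρ ∧ ∀ y, α + B y - γ * ‖y‖ ^ 2 = ρ - γ * ‖y - a‖ ^ 2 := by
  set b := (InnerProductSpace.toDual ℝ V).symm B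
  refine ⟨(2 * γ)⁻¹ • b, α + γ * ‖(2 * γ)⁻¹ • b‖ ^ 2, by positivity, fun y => ?_⟩
  have hB : B y = ⟪y, b⟫ := by rw [real_inner_comm, InnerProductSpace.toDual_symm_apply]
  rw [norm_sub_sq_real, real_inner_smul_right, hB]
  field_simp
  ring

theorem HasSectionCentres.exists_mem_iff (h : HasSectionCentres K l C)
    (hV : 2 ≤ Module.finrank ℝ V) :
    ∃ (a : V) (γ ρ : ℝ), 0 < γ ∧ 0 < ρ ∧
      ∀ y k, (y, k) ∈ K ↔ k ^ 2 + γ * ‖y - a‖ ^ 2 ≤ ρ := by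
  obtain ⟨B, γ, hheight⟩ := h.exists_halfHeight_sq_eq hV
  have hα : 0 < halfHeight K 0 ^ 2 := pow_pos (h.halfHeight_pos h.zero_mem_innerShadow) 2
  have hγ := h.coeff_pos_of_halfHeight_sq_eq hV hα hheight
  obtain ⟨a, ρ, hρ, hsquare⟩ := exists_add_apply_sub_mul_norm_sq_eq B hα hγ
  refine ⟨a, γ, ρ, hγ, hρ, fun y k => ?_⟩
  rw [h.mem_iff_of_halfHeight_sq_eq hV hα hheight, hsquare, le_sub_iff_add_le]

end QuadraticBodies

section SectionSymmetry

section Involutions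

variable {E : Type*} [NormedAddCommGroup E] [InnerProductSpace ℝ E]

lemma exists_linearIsometryEquiv_of_involution {f : E → E} (hf : Isometry f) (hff : f ∘ f = id)
    {o : E} (ho : f o = o) :
    ∃ A : E ≃ₗᵢ[ℝ] E, (∀ d, f (o + d) = o + A d) ∧ ∀ d, A (A d) = d := by
  let g := (IsometryEquiv.mk' f f (congrFun hff) hf).toRealAffineIsometryEquiv
  have hg (d : E) : f (o + d) = o + g.linearIsometryEquiv d := by
    have hmap : f (d + o) = g.linearIsometryEquiv d + f o := g.map_vadd o d
    rw [add_comm o, hmap, ho, add_comm]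
  refine ⟨g.linearIsometryEquiv, hg, fun d => ?_⟩
  have hdd : f (f (o + d)) = o + d := congrFun hff (o + d)
  rwa [hg, hg, add_right_inj] at hdd

lemma eq_neg_of_inner_add_eq_zero {A : E ≃ₗᵢ[ℝ] E} (hA : ∀ d, A (A d) = d) {d : E}
    (hd : ⟪d, d + A d⟫ = 0) : A d = -d := by
  have hz : ⟪d + A d, d + A d⟫ = 0 := by
    have hAd : ⟪A d, d + A d⟫ = ⟪d, d + A d⟫ := by
      rw [← A.inner_map_map d, map_add, hA, add_comm (A d)]
    rw [inner_add_left, hAd, hd, add_zero]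
  exact (neg_eq_of_add_eq_zero_right (inner_self_eq_zero.1 hz)).symm

end Involutions

lemma IsSectionSymmPlane.sub_mem {n : ℕ} {K : Set (Euc n)} {P L : AffineSubspace ℝ (Euc n)}
    (h : IsSectionSymmPlane K P L) {o d : Euc n} (ho : o ∈ L) (hdP : d ∈ P.direction)
    (hdL : ∀ z ∈ L.direction, ⟪d, z⟫ = 0) (hdK : o + d ∈ K) : o - d ∈ K := by
  obtain ⟨hLP, f, hf, hff, hfP, hfix, hfK⟩ := h
  have hfo : f o = o := ((Set.ext_iff.1 hfix o).2 ho).2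
  obtain ⟨A, hfA, hA⟩ := exists_linearIsometryEquiv_of_involution hf hff hfo
  have hP (z : Euc n) : z ∈ P.direction ↔ o + z ∈ P := by
    rw [← AffineSubspace.vadd_mem_iff_mem_direction z (hLP ho), vadd_eq_add, add_comm]
  have hAd : A d ∈ P.direction := by
    rw [hP, ← hfA]
    exact hfP.subset (mem_image_of_mem f ((hP d).1 hdP))
  have hzL : d + A d ∈ L.direction := by
    rw [← AffineSubspace.vadd_mem_iff_mem_direction _ ho, vadd_eq_add, add_comm]
    refine hfix.subset ⟨(hP _).1 (add_mem hdP hAd), ?_⟩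
    rw [hfA, map_add, hA, add_comm d]
  rw [sub_eq_add_neg, ← eq_neg_of_inner_add_eq_zero hA (hdL _ hzL), ← hfA]
  exact (hfK.subset (mem_image_of_mem f ⟨(hP d).1 hdP, hdK⟩)).2

section Dimensions

variable {E : Type*} [NormedAddCommGroup E] [InnerProductSpace ℝ E] [FiniteDimensional ℝ E]
  {u v : E}

lemma finrank_orthogonal_singleton (hu : u ≠ 0) :
    Module.finrank ℝ (ℝ ∙ u)ᗮ = Module.finrank ℝ E - 1 := by
  rw [← (ℝ ∙ u).finrank_add_finrank_orthogonal, finrank_span_singleton hu, Nat.add_sub_cancel_left]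

lemma finrank_orthogonal_inf_orthogonal (hu : u ≠ 0) (hv : v ≠ 0) (huv : ⟪u, v⟫ = 0) :
    Module.finrank ℝ ((ℝ ∙ u)ᗮ ⊓ (ℝ ∙ v)ᗮ : Submodule ℝ E) = Module.finrank ℝ E - 2 := by
  have hli : LinearIndependent ℝ ![u, v] := by
    refine linearIndependent_of_ne_zero_of_inner_eq_zero ?_ ?_
    · simp [Fin.forall_fin_two, hu, hv]
    · intro i j hij
      fin_cases i <;> fin_cases j <;> simp_all [real_inner_comm]
  have hrank : Module.finrank ℝ (Submodule.span ℝ {u, v}) = 2 := by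
    rw [← Matrix.range_cons_cons_empty u v ![], finrank_span_eq_card hli, Fintype.card_fin]
  rw [Submodule.inf_orthogonal, ← Submodule.span_insert,
    ← (Submodule.span ℝ {u, v}).finrank_add_finrank_orthogonal, hrank, Nat.add_sub_cancel_left]

end Dimensions

section SectionsThroughPoint

variable {n : ℕ} {K : Set (Euc n)} {u p : Euc n}

lemma isHyperplane_mk'_orthogonal (p : Euc n) {q : Euc n} (hq : q ≠ 0) :
    IsHyperplane (AffineSubspace.mk' p (ℝ ∙ q)ᗮ) := by
  refine ⟨⟨p, AffineSubspace.self_mem_mk' p _⟩, ?_⟩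
  rw [AffineSubspace.direction_mk', finrank_orthogonal_singleton hq, finrank_euclideanSpace_fin]

/-- Every hyperplane section of `K` through `p` has an `(n - 2)`-plane of symmetry orthogonal to
`u`. -/
def HasSectionSymmetry (K : Set (Euc n)) (u p : Euc n) : Prop :=
  ∀ P : AffineSubspace ℝ (Euc n), IsHyperplane P → p ∈ P →
    ∃ L : AffineSubspace ℝ (Euc n), Module.finrank ℝ L.direction = n - 2 ∧
      L.direction ≤ (ℝ ∙ u)ᗮ ∧ IsSectionSymmPlane K P L

lemma direction_eq_of_le_orthogonal {L : AffineSubspace ℝ (Euc n)} {v : Euc n} (hu : u ≠ 0)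
    (hv : v ≠ 0) (huv : ⟪u, v⟫ = 0) {r : ℝ} (hrank : Module.finrank ℝ L.direction = n - 2)
    (hLu : L.direction ≤ (ℝ ∙ u)ᗮ) (hLq : L.direction ≤ (ℝ ∙ (v - r • u))ᗮ) :
    L.direction = (ℝ ∙ u)ᗮ ⊓ (ℝ ∙ v)ᗮ := by
  refine Submodule.eq_of_le_of_finrank_eq (le_inf hLu fun z hz => ?_) ?_
  · have hzu := Submodule.mem_orthogonal_singleton_iff_inner_right.1 (hLu hz)
    have hzq := Submodule.mem_orthogonal_singleton_iff_inner_right.1 (hLq hz)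
    rwa [inner_sub_left, real_inner_smul_left, hzu, mul_zero, sub_zero,
      ← Submodule.mem_orthogonal_singleton_iff_inner_right] at hzq
  · rw [hrank, finrank_orthogonal_inf_orthogonal hu hv huv, finrank_euclideanSpace_fin]

lemma HasSectionSymmetry.exists_isSectionSymmPlane (h : HasSectionSymmetry K u p) (hn : 3 ≤ n)
    (hu : u ≠ 0) {v : Euc n} (hv : v ≠ 0) (huv : ⟪u, v⟫ = 0) (r : ℝ) :
    ∃ L : AffineSubspace ℝ (Euc n), (L : Set (Euc n)).Nonempty ∧
      L.direction = (ℝ ∙ u)ᗮ ⊓ (ℝ ∙ v)ᗮ ∧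
        IsSectionSymmPlane K (AffineSubspace.mk' p (ℝ ∙ (v - r • u))ᗮ) L := by
  have hq : v - r • u ≠ 0 := fun hq => by
    have hqv : ⟪v - r • u, v⟫ = 0 := by rw [hq, inner_zero_left]
    rw [inner_sub_left, real_inner_smul_left, huv, mul_zero, sub_zero] at hqv
    exact hv (inner_self_eq_zero.1 hqv)
  obtain ⟨L, hrank, hLu, hsymm⟩ := h _ (isHyperplane_mk'_orthogonal p hq)
    (AffineSubspace.self_mem_mk' p _)
  refine ⟨L, L.eq_bot_or_nonempty.resolve_left ?_, ?_, hsymm⟩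
  · rintro rfl
    rw [AffineSubspace.direction_bot, finrank_bot] at hrank
    omega
  · exact direction_eq_of_le_orthogonal hu hv huv hrank hLu
      ((AffineSubspace.direction_le hsymm.1).trans_eq (AffineSubspace.direction_mk' p _))

lemma exists_add_smul_mem {L : AffineSubspace ℝ (Euc n)} {v : Euc n} (hu : ‖u‖ = 1)
    (huv : ⟪u, v⟫ = 0) {t : ℝ} (hne : (L : Set (Euc n)).Nonempty)
    (hL : L ≤ AffineSubspace.mk' p (ℝ ∙ (v - (t * ‖v‖ ^ 2) • u))ᗮ)
    (hdir : L.direction = (ℝ ∙ u)ᗮ ⊓ (ℝ ∙ v)ᗮ) : ∃ s : ℝ, p + s • (t • v + u) ∈ L := by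
  obtain ⟨o, ho⟩ := hne
  refine ⟨⟪u, o - p⟫, ?_⟩
  have hop : ⟪v - (t * ‖v‖ ^ 2) • u, o - p⟫ = 0 :=
    Submodule.mem_orthogonal_singleton_iff_inner_right.1 (AffineSubspace.mem_mk'.1 (hL ho))
  rw [inner_sub_left, real_inner_smul_left] at hop
  have hmem : ⟪u, o - p⟫ • (t • v + u) - (o - p) ∈ L.direction := by
    rw [hdir, Submodule.mem_inf, Submodule.mem_orthogonal_singleton_iff_inner_right,
      Submodule.mem_orthogonal_singleton_iff_inner_right]
    simp only [inner_sub_right, inner_add_right, real_inner_smul_right, huv, real_inner_comm u v,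
      real_inner_self_eq_norm_sq, hu] at hop ⊢
    constructor <;> linarith
  have hvadd := AffineSubspace.vadd_mem_of_mem_direction hmem ho
  rw [vadd_eq_add] at hvadd
  convert hvadd using 1
  abel

lemma HasSectionSymmetry.exists_reflect_mem (h : HasSectionSymmetry K u p) (hn : 3 ≤ n)
    (hu : ‖u‖ = 1) {v : Euc n} (hv : v ≠ 0) (huv : ⟪u, v⟫ = 0) (t : ℝ) :
    ∃ c : ℝ, ∀ x : Euc n, ⟪u, x⟫ = 0 → ⟪v, x⟫ = 0 → ∀ s : ℝ,
      p + x + s • (t • v + u) ∈ K → p + x + (c - s) • (t • v + u) ∈ K := by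
  have hu0 : u ≠ 0 := norm_ne_zero_iff.1 (hu ▸ one_ne_zero)
  obtain ⟨L, hne, hdir, hsymm⟩ := h.exists_isSectionSymmPlane hn hu0 hv huv (t * ‖v‖ ^ 2)
  obtain ⟨s₀, hs₀⟩ := exists_add_smul_mem hu huv hne hsymm.1 hdir
  have hmemL (z : Euc n) : z ∈ L.direction ↔ ⟪u, z⟫ = 0 ∧ ⟪v, z⟫ = 0 := by
    simp only [hdir, Submodule.mem_inf, Submodule.mem_orthogonal_singleton_iff_inner_right]
  have hdP : ⟪v - (t * ‖v‖ ^ 2) • u, t • v + u⟫ = 0 := by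
    simp only [inner_add_right, inner_sub_left, real_inner_smul_left, real_inner_smul_right, huv,
      real_inner_comm u v, real_inner_self_eq_norm_sq, hu]
    ring
  refine ⟨2 * s₀, fun x hux hvx s hs => ?_⟩
  have hreflect := hsymm.sub_mem (d := (s - s₀) • (t • v + u))
    (AffineSubspace.vadd_mem_of_mem_direction ((hmemL x).2 ⟨hux, hvx⟩) hs₀)
    (by
      rw [AffineSubspace.direction_mk', Submodule.mem_orthogonal_singleton_iff_inner_right,
        real_inner_smul_right, hdP, mul_zero])
    (fun z hz => by
      rw [real_inner_smul_left, inner_add_left, real_inner_smul_left, ((hmemL z).1 hz).1,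
        ((hmemL z).1 hz).2, mul_zero, add_zero, mul_zero])
    (by
      convert hs using 1
      rw [vadd_eq_add]
      module)
  convert hreflect using 1
  rw [vadd_eq_add]
  module

end SectionsThroughPoint

end SectionSymmetry

section AxialCoordinates

variable {E : Type*} [NormedAddCommGroup E] [InnerProductSpace ℝ E] {u : E}

/-- Coordinates adapted to the axis spanned by the unit vector `u`: the pair `(y, k)` with `y ⟂ u`
stands for the vector `y + k • u`. -/
def axialEquiv (hu : ‖u‖ = 1) : ((ℝ ∙ u)ᗮ × ℝ) ≃ₗ[ℝ] E where
  toFun z := z.1 + z.2 • u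
  map_add' z z' := by
    simp only [Prod.fst_add, Prod.snd_add, Submodule.coe_add]
    module
  map_smul' r z := by
    simp only [Prod.smul_fst, Prod.smul_snd, Submodule.coe_smul, smul_eq_mul, RingHom.id_apply]
    module
  invFun x := ⟨⟨x - ⟪u, x⟫ • u, by
    rw [Submodule.mem_orthogonal_singleton_iff_inner_right, inner_sub_right,
      real_inner_smul_right, real_inner_self_eq_norm_sq, hu]
    ring⟩, ⟪u, x⟫⟩
  left_inv z := by
    have hz : ⟪u, z.1 + z.2 • u⟫ = z.2 := by
      rw [inner_add_right, Submodule.mem_orthogonal_singleton_iff_inner_right.1 z.1.2,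
        real_inner_smul_right, real_inner_self_eq_norm_sq, hu]
      ring
    simp [hz]
  right_inv x := sub_add_cancel x _

lemma axialEquiv_apply (hu : ‖u‖ = 1) (y : (ℝ ∙ u)ᗮ) (k : ℝ) :
    axialEquiv hu (y, k) = y + k • u := rfl

lemma inner_axialEquiv (hu : ‖u‖ = 1) (z : (ℝ ∙ u)ᗮ × ℝ) : ⟪u, axialEquiv hu z⟫ = z.2 :=
  congrArg Prod.snd ((axialEquiv hu).symm_apply_apply z)

lemma norm_axialEquiv_sq (hu : ‖u‖ = 1) (z : (ℝ ∙ u)ᗮ × ℝ) :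
    ‖axialEquiv hu z‖ ^ 2 = ‖z.1‖ ^ 2 + z.2 ^ 2 := by
  rw [axialEquiv_apply, norm_add_sq_real, real_inner_smul_right,
    Submodule.mem_orthogonal_singleton_iff_inner_left.1 z.1.2, norm_smul, hu, Real.norm_eq_abs,
    mul_one, sq_abs, Submodule.coe_norm]
  ring

/-- The set `K` in the coordinates `axialEquiv` with origin `o`. -/
def axialBody (hu : ‖u‖ = 1) (K : Set E) (o : E) : Set ((ℝ ∙ u)ᗮ × ℝ) :=
  {z | o + axialEquiv hu z ∈ K}

lemma mk_mem_axialBody {hu : ‖u‖ = 1} {K : Set E} {o : E} {y : (ℝ ∙ u)ᗮ} {k : ℝ} :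
    (y, k) ∈ axialBody hu K o ↔ o + (y + k • u) ∈ K := Iff.rfl

lemma isVerticallySymmetricBody_axialBody [FiniteDimensional ℝ E] (hu : ‖u‖ = 1) {K : Set E}
    (hK : IsCompact K) (hconv : Convex ℝ K) {o : E} (ho : o ∈ interior K)
    (hsymm : ∀ {y k}, (y, k) ∈ axialBody hu K o → (y, -k) ∈ axialBody hu K o) :
    IsVerticallySymmetricBody (axialBody hu K o) where
  isCompact := (((axialEquiv hu).toContinuousLinearEquiv.toHomeomorph.trans
    (Homeomorph.addLeft o)).isClosedEmbedding.isCompact_preimage hK :)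
  convex := (hconv.translate_preimage_right o).linear_preimage (axialEquiv hu).toLinearMap
  zero_mem_interior := by
    have hcont : Continuous fun z => o + axialEquiv hu z :=
      continuous_const.add (axialEquiv hu).toLinearMap.continuous_of_finiteDimensional
    refine preimage_interior_subset_interior_preimage hcont ?_
    simpa using ho
  neg_height_mem := hsymm

end AxialCoordinates

section NormalForm

lemma eq_sInf_add_sSup_of_reflect_mem {S : Set ℝ} (hS : IsCompact S) (hne : S.Nonempty) {c : ℝ}
    (hc : ∀ s ∈ S, c - s ∈ S) : c = sInf S + sSup S := by
  have hbot := csInf_le hS.bddBelow (hc _ (hS.sSup_mem hne))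
  have htop := le_csSup hS.bddAbove (hc _ (hS.sInf_mem hne))
  linarith

variable {n : ℕ} {K : Set (Euc n)} {u p : Euc n}

lemma isSymmetryPlane_mk'_orthogonal (hu : ‖u‖ = 1)
    (h : ∀ x, ⟪u, x⟫ = 0 → ∀ s : ℝ, p + x + s • u ∈ K → p + x + -s • u ∈ K) :
    IsSymmetryPlane K (AffineSubspace.mk' p (ℝ ∙ u)ᗮ) := by
  have : Nonempty (AffineSubspace.mk' p (ℝ ∙ u)ᗮ) := ⟨⟨p, AffineSubspace.self_mem_mk' _ _⟩⟩
  have hdir := AffineSubspace.direction_mk' p (ℝ ∙ u)ᗮ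
  have : (AffineSubspace.mk' p (ℝ ∙ u)ᗮ).direction.HasOrthogonalProjection := hdir ▸ inferInstance
  set f := EuclideanGeometry.reflection (AffineSubspace.mk' p (ℝ ∙ u)ᗮ)
  have hff (x : Euc n) : f (f x) = x := EuclideanGeometry.reflection_reflection _ x
  have hfK {x : Euc n} (hx : x ∈ K) : f x ∈ K := by
    obtain ⟨⟨y, s⟩, hys⟩ := (axialEquiv hu).surjective (x - p)
    rw [axialEquiv_apply, eq_sub_iff_add_eq'] at hys
    subst hys
    have hsu : s • u ∈ (AffineSubspace.mk' p (ℝ ∙ u)ᗮ).directionᗮ := by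
      rw [hdir, Submodule.orthogonal_orthogonal]
      exact Submodule.smul_mem _ s (Submodule.mem_span_singleton_self u)
    have hy : p + y ∈ AffineSubspace.mk' p (ℝ ∙ u)ᗮ := by
      simp [AffineSubspace.mem_mk']
    have hfx : f (p + (y + s • u)) = p + y + -s • u := by
      have := EuclideanGeometry.reflection_orthogonal_vadd hy hsu
      rwa [vadd_eq_add, vadd_eq_add, add_comm, add_assoc, add_comm (-(s • u)), ← neg_smul] at this
    rw [hfx]
    exact h y (Submodule.mem_orthogonal_singleton_iff_inner_right.1 y.2) s (by rwa [add_assoc])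
  refine ⟨f, ⟨f.isometry, funext hff, ?_⟩, subset_antisymm (image_subset_iff.2 fun x => hfK) ?_⟩
  · ext x
    exact EuclideanGeometry.reflection_eq_self_iff x
  · exact fun x hx => ⟨f x, hfK hx, hff x⟩

lemma HasSectionSymmetry.exists_reflect_axial_mem (h : HasSectionSymmetry K u p) (hn : 3 ≤ n)
    (hu : ‖u‖ = 1) (hK : IsCompact K) (hp : p ∈ K) :
    ∃ l : ℝ, ∀ x, ⟪u, x⟫ = 0 → ∀ s : ℝ, p + x + s • u ∈ K → p + x + (2 * l - s) • u ∈ K := by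
  set S : Set ℝ := {s | p + s • u ∈ K} with hS
  have hu0 : u ≠ 0 := norm_ne_zero_iff.1 (hu ▸ one_ne_zero)
  have hScompact : IsCompact S :=
    ((Homeomorph.addLeft p).isClosedEmbedding.comp
      (isClosedEmbedding_smul_left hu0)).isCompact_preimage hK
  refine ⟨(sInf S + sSup S) / 2, fun x hux s hs => ?_⟩
  obtain ⟨v, hv, hxv⟩ := exists_norm_eq_one_inner_eq_zero (V := (ℝ ∙ u)ᗮ)
    (by rw [finrank_orthogonal_singleton hu0, finrank_euclideanSpace_fin]; omega)
    ⟨x, Submodule.mem_orthogonal_singleton_iff_inner_right.2 hux⟩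
  obtain ⟨c, hc⟩ := h.exists_reflect_mem hn hu (v := v) (norm_ne_zero_iff.1 (hv ▸ one_ne_zero))
    (Submodule.mem_orthogonal_singleton_iff_inner_right.1 v.2) 0
  simp only [zero_smul, zero_add] at hc
  have hcS : c = sInf S + sSup S := eq_sInf_add_sSup_of_reflect_mem hScompact
    ⟨0, by simpa [hS] using hp⟩ fun s hs => by
      simpa [hS] using hc 0 (inner_zero_right _) (inner_zero_right _) s (by simpa [hS] using hs)
  rw [mul_div_cancel₀ _ two_ne_zero, ← hcS]
  exact hc x hux ((real_inner_comm _ _).trans hxv) s hs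

lemma add_smul_mem_interior (hconv : Convex ℝ K) (hp : p ∈ interior K) {l : ℝ}
    (hl : p + (2 * l) • u ∈ K) : p + l • u ∈ interior K := by
  have hmid := hconv.combo_interior_self_mem_interior hp hl (a := 1 / 2) (b := 1 / 2)
    (by norm_num) (by norm_num) (by norm_num)
  convert hmid using 1
  module

lemma HasSectionSymmetry.exists_hasSectionCentres (h : HasSectionSymmetry K u p) (hn : 3 ≤ n)
    (hu : ‖u‖ = 1) (hK : IsCompact K) (hconv : Convex ℝ K) (hp : p ∈ interior K)
    (hnotsym : ¬ IsSymmetryPlane K (AffineSubspace.mk' p (ℝ ∙ u)ᗮ)) :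
    ∃ (o : Euc n) (l : ℝ) (C : (ℝ ∙ u)ᗮ → ℝ), HasSectionCentres (axialBody hu K o) l C := by
  have horth (y : (ℝ ∙ u)ᗮ) : ⟪u, (y : Euc n)⟫ = 0 :=
    Submodule.mem_orthogonal_singleton_iff_inner_right.1 y.2
  obtain ⟨l, hl⟩ := h.exists_reflect_axial_mem hn hu hK (interior_subset hp)
  have hcentre (w : (ℝ ∙ u)ᗮ) : ∃ c : ℝ, ∀ x : (ℝ ∙ u)ᗮ, ⟪w, x⟫ = 0 → ∀ s : ℝ,
      p + x + s • (w + u) ∈ K → p + x + (c - s) • (w + u) ∈ K := by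
    obtain rfl | hw := eq_or_ne w 0
    · exact ⟨2 * l, fun x _ => by simpa using hl x (horth x)⟩
    · obtain ⟨c, hc⟩ := h.exists_reflect_mem hn hu
        ((Submodule.coe_eq_zero (x := w)).not.2 hw) (horth w) 1
      exact ⟨c, fun x hx => by simpa only [one_smul] using hc x (horth x) hx⟩
  choose c hc using hcentre
  have hline (x w : (ℝ ∙ u)ᗮ) (k : ℝ) :
      (x + (k + l) • w, k) ∈ axialBody hu K (p + l • u) ↔ p + x + (k + l) • (w + u) ∈ K := by
    rw [mk_mem_axialBody, Submodule.coe_add, Submodule.coe_smul]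
    convert Iff.rfl using 2
    module
  refine ⟨p + l • u, l, fun w => c w - 2 * l, ?_, fun hl0 => hnotsym ?_, ?_⟩
  · refine isVerticallySymmetricBody_axialBody hu hK hconv
      (add_smul_mem_interior hconv hp ?_) fun {y k} hyk => ?_
    · simpa using hl 0 (inner_zero_right u) 0 (by simpa using interior_subset hp)
    · rw [mk_mem_axialBody] at hyk ⊢
      convert hl y (horth y) (k + l) (by convert hyk using 1; module) using 1
      module
  · exact isSymmetryPlane_mk'_orthogonal hu (by simpa [hl0] using hl)
  · intro w x k hxw hk
    rw [hline] at hk ⊢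
    convert hc w x ((real_inner_comm _ _).trans hxw) _ hk using 3
    ring

end NormalForm

section Spheroids

variable {E : Type*} [NormedAddCommGroup E] [InnerProductSpace ℝ E] {o u : E} {γ ρ : ℝ}

/-- The solid ellipsoid of revolution with centre `o` and axis `o + ℝ u`, for a unit vector `u` and
`γ, ρ > 0`: its semi-axes are `√ρ` along `u` and `√(ρ / γ)` orthogonally to `u`. -/
def spheroid (o u : E) (γ ρ : ℝ) : Set E :=
  {z | ⟪u, z - o⟫ ^ 2 + γ * (‖z - o‖ ^ 2 - ⟪u, z - o⟫ ^ 2) ≤ ρ}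

lemma add_axialEquiv_mem_spheroid (hu : ‖u‖ = 1) (z : (ℝ ∙ u)ᗮ × ℝ) :
    o + axialEquiv hu z ∈ spheroid o u γ ρ ↔ z.2 ^ 2 + γ * ‖z.1‖ ^ 2 ≤ ρ := by
  rw [spheroid, mem_ofPred_eq, add_sub_cancel_left, inner_axialEquiv, norm_axialEquiv_sq,
    add_sub_cancel_right]

lemma eq_spheroid_of_mem_axialBody_iff (hu : ‖u‖ = 1) {K : Set E} {a : (ℝ ∙ u)ᗮ}
    (hK : ∀ y k, (y, k) ∈ axialBody hu K o ↔ k ^ 2 + γ * ‖y - a‖ ^ 2 ≤ ρ) :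
    K = spheroid (o + a) u γ ρ := by
  ext z
  obtain ⟨⟨y, k⟩, hyk⟩ := (axialEquiv hu).surjective (z - (o + a))
  rw [eq_sub_iff_add_eq'] at hyk
  subst hyk
  rw [add_axialEquiv_mem_spheroid, ← add_sub_cancel_right y a, ← hK, mk_mem_axialBody,
    add_sub_cancel_right, axialEquiv_apply, Submodule.coe_add]
  convert Iff.rfl using 2
  abel

lemma image_spheroid_of_map_eq (f : E ≃ᵃⁱ[ℝ] E) (ho : f o = o)
    (hou : f (o + u) = o + u) : f '' spheroid o u γ ρ = spheroid o u γ ρ := by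
  have hlin (z : E) : f z - o = f.linearIsometryEquiv (z - o) := by
    simpa [ho] using (f.map_vsub z o).symm
  have hu : f.linearIsometryEquiv u = u := by
    simpa [hou] using (hlin (o + u)).symm
  have hinner (z : E) : ⟪u, f z - o⟫ = ⟪u, z - o⟫ := by
    rw [hlin, ← f.linearIsometryEquiv.inner_map_map u (z - o), hu]
  have hpre : f ⁻¹' spheroid o u γ ρ = spheroid o u γ ρ := by
    ext z
    simp only [spheroid, mem_preimage, mem_ofPred_eq, hinner]
    rw [hlin, LinearIsometryEquiv.norm_map]
  conv_lhs => rw [← hpre]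
  exact image_preimage_eq _ f.surjective

lemma exists_image_closedBall_eq_spheroid (hu : ‖u‖ = 1) (hγ : 0 < γ) (hρ : 0 < ρ) :
    ∃ T : E ≃ᵃ[ℝ] E, T '' closedBall 0 1 = spheroid o u γ ρ := by
  have hργ : 0 < ρ / γ := div_pos hρ hγ
  let S : E ≃ₗ[ℝ] E := (axialEquiv hu).symm ≪≫ₗ
    (LinearEquiv.smulOfNeZero ℝ (ℝ ∙ u)ᗮ √(ρ / γ) (Real.sqrt_pos.2 hργ).ne').prodCongr
      (LinearEquiv.smulOfNeZero ℝ ℝ √ρ (Real.sqrt_pos.2 hρ).ne') ≪≫ₗ axialEquiv hu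
  let T : E ≃ᵃ[ℝ] E := S.toAffineEquiv.trans (AffineEquiv.constVAdd ℝ E o)
  have hT (y : (ℝ ∙ u)ᗮ) (k : ℝ) :
      T (axialEquiv hu (y, k)) = o + axialEquiv hu (√(ρ / γ) • y, √ρ * k) := by
    simp [T, S]
  have hpre : T ⁻¹' spheroid o u γ ρ = closedBall 0 1 := by
    ext x
    obtain ⟨⟨y, k⟩, rfl⟩ := (axialEquiv hu).surjective x
    rw [mem_preimage, hT, add_axialEquiv_mem_spheroid, mem_closedBall_zero_iff,
      ← sq_le_one_iff₀ (norm_nonneg _), norm_axialEquiv_sq, norm_smul, mul_pow, mul_pow,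
      Real.norm_eq_abs, sq_abs, Real.sq_sqrt hρ.le, Real.sq_sqrt hργ.le, ← mul_assoc,
      mul_div_cancel₀ _ hγ.ne', ← mul_add, mul_le_iff_le_one_right hρ, add_comm]
  exact ⟨T, by rw [← hpre, image_preimage_eq _ T.surjective]⟩

end Spheroids

lemma isEllipsoidOfDim_spheroid {n : ℕ} {o u : Euc n} {γ ρ : ℝ} (hu : ‖u‖ = 1) (hγ : 0 < γ)
    (hρ : 0 < ρ) : IsEllipsoidOfDim n (spheroid o u γ ρ) := by
  obtain ⟨T, hT⟩ := exists_image_closedBall_eq_spheroid (o := o) hu hγ hρ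
  exact ⟨T, ⊤, by simp, by rw [Submodule.top_coe, inter_univ, hT]⟩

lemma HasSectionSymmetry.exists_eq_spheroid {n : ℕ} {K : Set (Euc n)} {u p : Euc n}
    (h : HasSectionSymmetry K u p) (hn : 3 ≤ n) (hu : ‖u‖ = 1) (hK : IsCompact K)
    (hconv : Convex ℝ K) (hp : p ∈ interior K)
    (hnotsym : ¬ IsSymmetryPlane K (AffineSubspace.mk' p (ℝ ∙ u)ᗮ)) :
    ∃ (o : Euc n) (γ ρ : ℝ), 0 < γ ∧ 0 < ρ ∧ K = spheroid o u γ ρ := by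
  obtain ⟨o, l, C, hC⟩ := h.exists_hasSectionCentres hn hu hK hconv hp hnotsym
  have hrank : 2 ≤ Module.finrank ℝ (ℝ ∙ u)ᗮ := by
    rw [finrank_orthogonal_singleton (norm_ne_zero_iff.1 (hu ▸ one_ne_zero)),
      finrank_euclideanSpace_fin]
    omega
  obtain ⟨a, γ, ρ, hγ, hρ, hmem⟩ := hC.exists_mem_iff hrank
  exact ⟨o + a, γ, ρ, hγ, hρ, eq_spheroid_of_mem_axialBody_iff hu hmem⟩

lemma IsHyperplane.exists_direction_eq_orthogonal {n : ℕ} (hn : n ≠ 0)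
    {H : AffineSubspace ℝ (Euc n)} (hH : IsHyperplane H) :
    ∃ u : Euc n, ‖u‖ = 1 ∧ H.direction = (ℝ ∙ u)ᗮ := by
  have hrank : Module.finrank ℝ H.directionᗮ = 1 := by
    have hsum := H.direction.finrank_add_finrank_orthogonal
    rw [hH.2, finrank_euclideanSpace_fin] at hsum
    omega
  have : Nontrivial H.directionᗮ := Module.nontrivial_of_finrank_pos (R := ℝ) (by omega)
  obtain ⟨u, hu⟩ := exists_norm_eq H.directionᗮ zero_le_one
  have hspan : (ℝ ∙ (u : Euc n)) = H.directionᗮ := by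
    refine Submodule.eq_of_le_of_finrank_eq ((Submodule.span_singleton_le_iff_mem _ _).2 u.2) ?_
    rw [hrank, finrank_span_singleton]
    exact norm_ne_zero_iff.1 (hu.trans_ne one_ne_zero)
  exact ⟨u, hu, by rw [hspan, Submodule.orthogonal_orthogonal]⟩

end Development

theorem stmt16_general {n : ℕ} (hn : 3 ≤ n) (K : Set (Euc n)) (hK : IsConvexBody K)
    (H : AffineSubspace ℝ (Euc n)) (hH : IsHyperplane H)
    (p : Euc n) (hp : p ∈ interior K)
    (hnotsym : ∀ H' : AffineSubspace ℝ (Euc n), H'.direction = H.direction →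
      IsSymmetryPlane K H' → p ∉ H')
    (hsec : ∀ P : AffineSubspace ℝ (Euc n), IsHyperplane P → p ∈ P →
      ∃ L : AffineSubspace ℝ (Euc n), Module.finrank ℝ L.direction = n - 2 ∧
        L.direction ≤ H.direction ∧ IsSectionSymmPlane K P L) :
    ∃ L : AffineSubspace ℝ (Euc n), (L : Set (Euc n)).Nonempty ∧
      L.direction = H.directionᗮ ∧ IsEllipsoidOfDim n K ∧
      ∀ f : Euc n ≃ᵃⁱ[ℝ] Euc n, IsRotationAbout f L → f '' K = K := by
  obtain ⟨u, hu, hHu⟩ := hH.exists_direction_eq_orthogonal (by omega)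
  rw [hHu] at hnotsym hsec ⊢
  have hp_not_symm : ¬ IsSymmetryPlane K (AffineSubspace.mk' p (ℝ ∙ u)ᗮ) := fun hsymm =>
    hnotsym _ (AffineSubspace.direction_mk' p _) hsymm (AffineSubspace.self_mem_mk' p _)
  obtain ⟨o, γ, ρ, hγ, hρ, rfl⟩ :=
    HasSectionSymmetry.exists_eq_spheroid hsec hn hu hK.1 hK.2.1 hp hp_not_symm
  refine ⟨AffineSubspace.mk' o (ℝ ∙ u)ᗮᗮ, ⟨o, AffineSubspace.self_mem_mk' o _⟩,
    AffineSubspace.direction_mk' o _, isEllipsoidOfDim_spheroid hu hγ hρ, fun f hf => ?_⟩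
  have hou : o + u ∈ AffineSubspace.mk' o (ℝ ∙ u)ᗮᗮ := by
    rw [AffineSubspace.mem_mk', Submodule.orthogonal_orthogonal, vsub_eq_sub, add_sub_cancel_left]
    exact Submodule.mem_span_singleton_self u
  exact image_spheroid_of_map_eq f (hf.1 o (AffineSubspace.self_mem_mk' o _)) (hf.1 _ hou)

/-- Main theorem: a Larman point `p` that is not a revolution point,
not on a hyperplane of symmetry of `K` parallel to `H`, with all hyperplane sections
through `p` having an `(n-2)`-plane of symmetry parallel to `H`, forces `K` to be an
ellipsoid of revolution with axis perpendicular to `H`. -/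
theorem stmt16 {n : ℕ} (hn : 3 ≤ n) (K : Set (Euc n)) (hK : IsConvexBody K)
    (H : AffineSubspace ℝ (Euc n)) (hH : IsHyperplane H)
    (p : Euc n) (hp : p ∈ interior K)
    (hLarman : IsLarmanPoint K p) (hnotrev : ¬ IsRevolutionPoint K p)
    (hnotsym : ∀ H' : AffineSubspace ℝ (Euc n), H'.direction = H.direction →
      IsSymmetryPlane K H' → p ∉ H')
    (hsec : ∀ P : AffineSubspace ℝ (Euc n), IsHyperplane P → p ∈ P →
      ∃ L : AffineSubspace ℝ (Euc n), Module.finrank ℝ L.direction = n - 2 ∧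
        L.direction ≤ H.direction ∧ IsSectionSymmPlane K P L) :
    ∃ L : AffineSubspace ℝ (Euc n), (L : Set (Euc n)).Nonempty ∧
      L.direction = H.directionᗮ ∧ IsEllipsoidOfDim n K ∧
      ∀ f : Euc n ≃ᵃⁱ[ℝ] Euc n, IsRotationAbout f L → f '' K = K := by
  exact stmt16_general hn K hK H hH p hp hnotsym hsec
end
end

section
/- Let K ⊂ ℝ^3 be a convex body with a plane of symmetry H, symmetric under reflection S across H, and let p be an interior point with p ∉ H, q = S(p). Suppose every plane section of K through p and every plane section through q has a line of symmetry parallel to H, and the boundary of K contains no segment parallel to H. Then for every line Γ ⊂ H, the shadow boundary S∂(K,Γ) is contained in a plane Δ orthogonal to Γ. -/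
noncomputable section

open Metric Set MeasureTheory

/-!
Project along `Γ`. A section through `p` whose plane contains `Γ` but is not parallel to `H` can
only have a line of symmetry parallel to `Γ`, so the mirror image of a shadow boundary point `x`
in that section is again a shadow boundary point. It has the same coordinate along `Γ` as `x`, and
its projection is the other end of the chord through `p`. The same holds for `q`. Hence the set of
shadow boundary points with a prescribed `Γ`-coordinate, which is compact, admits both chord maps.
Following the chord through `q` by the chord through `p` turns a point beyond `p` strictly towards
the axis `pq`, so the point of smallest slope beyond `p` lies over the ray from `q` through `p`.
The boundary of the projection meets this ray in a single point, and, since there are no boundary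
segments parallel to `Γ`, only one shadow boundary point lies over it. Thus all `Γ`-coordinates
on the shadow boundary agree.
-/

open Module

section LinearAlgebra

variable {𝕜 E : Type*} [Field 𝕜] [AddCommGroup E] [Module 𝕜 E] {D V : Submodule 𝕜 E} {v : E}

lemma exists_linearMap_apply_eq_one_of_notMem (hv : v ∉ V) :
    ∃ θ : E →ₗ[𝕜] 𝕜, θ v = 1 ∧ ∀ u ∈ V, θ u = 0 := by
  obtain ⟨θ, hθV, hθv⟩ := LinearMap.exists_extend_of_notMem (0 : V →ₗ[𝕜] 𝕜) hv 1
  exact ⟨θ, hθv, fun u hu ↦ LinearMap.congr_fun hθV ⟨u, hu⟩⟩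

lemma sub_apply_smul_mem_of_mem_sup_span {θ : E →ₗ[𝕜] 𝕜} (hθv : θ v = 1)
    (hθD : ∀ u ∈ D, θ u = 0) {u : E} (hu : u ∈ D ⊔ 𝕜 ∙ v) : u - θ u • v ∈ D := by
  obtain ⟨d, hd, _, hw, rfl⟩ := Submodule.mem_sup.1 hu
  obtain ⟨a, rfl⟩ := Submodule.mem_span_singleton.1 hw
  simpa [hθv, hθD d hd] using hd

lemma sup_span_singleton_inf_eq_of_notMem (hDV : D ≤ V) (hv : v ∉ V) :
    (D ⊔ 𝕜 ∙ v) ⊓ V = D := by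
  rw [sup_inf_assoc_of_le _ hDV, inf_comm,
    (Submodule.disjoint_span_singleton_of_notMem hv).eq_bot, sup_bot_eq]

end LinearAlgebra

lemma map_midpoint_self_of_isometry_of_involutive {E : Type*} [NormedAddCommGroup E]
    [NormedSpace ℝ E] {f : E → E} (hf : Isometry f) (hff : Function.Involutive f) (x : E) :
    f (midpoint ℝ x (f x)) = midpoint ℝ x (f x) :=
  calc f (midpoint ℝ x (f x)) = midpoint ℝ (f x) (f (f x)) :=
        (IsometryEquiv.mk' f f hff hf).map_midpoint x (f x)
    _ = midpoint ℝ x (f x) := by rw [hff x, midpoint_comm]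

lemma exists_pos_sub_smul_mem_of_mem_interior {E : Type*} [AddCommGroup E] [Module ℝ E]
    [TopologicalSpace E] [IsTopologicalAddGroup E] [ContinuousSMul ℝ E] {K : Set E} {c : E}
    (hc : c ∈ interior K) (v : E) : ∃ ε : ℝ, 0 < ε ∧ c - ε • v ∈ K := by
  have hlim : Filter.Tendsto (fun ε : ℝ ↦ c - ε • v) (nhdsWithin 0 (Ioi 0)) (nhds c) :=
    tendsto_nhdsWithin_of_tendsto_nhds <|
      (by fun_prop : Continuous fun ε : ℝ ↦ c - ε • v).tendsto' 0 c (by simp)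
  obtain ⟨ε, hε, hεpos⟩ :=
    ((hlim.eventually_mem (mem_interior_iff_mem_nhds.1 hc)).and self_mem_nhdsWithin).exists
  exact ⟨ε, hεpos, hε⟩

lemma apply_lt_of_isMinOn_of_mem_interior {E : Type*} [AddCommGroup E] [Module ℝ E]
    [TopologicalSpace E] [IsTopologicalAddGroup E] [ContinuousSMul ℝ E] {K : Set E}
    {P : AffineSubspace ℝ E} {θ : E →ₗ[ℝ] ℝ} {v x y : E} (hmin : IsMinOn θ (P ∩ K) x)
    (hv : v ∈ P.direction) (hθv : 0 < θ v) (hyP : y ∈ P) (hy : y ∈ interior K) : θ x < θ y := by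
  obtain ⟨ε, hε, hyε⟩ := exists_pos_sub_smul_mem_of_mem_interior hy v
  have hyεP : y - ε • v ∈ P := by
    rw [sub_eq_neg_add]
    exact AffineSubspace.vadd_mem_of_mem_direction (neg_mem (P.direction.smul_mem ε hv)) hyP
  have hle := isMinOn_iff.1 hmin _ ⟨hyεP, hyε⟩
  rw [map_sub, map_smul, smul_eq_mul] at hle
  linarith [mul_pos hε hθv]

section ChordDynamics

/-- The projections of `x` and `y` along `D` are collinear with that of `c` and lie on opposite
sides of it. For boundary points `x` and `y` of the projection this says that they are the two ends
of a chord through `c`. -/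
def IsOppositeMod {E : Type*} [AddCommGroup E] [Module ℝ E] (D : Submodule ℝ E) (c x y : E) :
    Prop :=
  ∃ s : ℝ, 0 < s ∧ y - c + s • (x - c) ∈ D

/- In the coordinates `τ` along the axis and `ν` across it, the maps in `hp` and `hq` are chords
through the points `(1, 0)` and `(0, 0)`. The point sought minimizes the slope `ν / τ`. -/
lemma exists_one_le_and_eq_zero_of_chords {X : Type*} [TopologicalSpace X] {A : Set X}
    (hA : IsCompact A) (hne : A.Nonempty) {τ ν : X → ℝ} (hτ : Continuous τ) (hν : Continuous ν)
    (hν0 : ∀ x, 0 ≤ ν x)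
    (hp : ∀ x ∈ A, τ x ≠ 1 → ∃ y ∈ A, ∃ s : ℝ, 0 < s ∧ τ y - 1 = -s * (τ x - 1) ∧ ν y = s * ν x)
    (hq : ∀ x ∈ A, τ x ≠ 0 → ∃ y ∈ A, ∃ s : ℝ, 0 < s ∧ τ y = -s * τ x ∧ ν y = s * ν x) :
    ∃ y ∈ A, 1 ≤ τ y ∧ ν y = 0 := by
  have hBne : (A ∩ {x | 1 ≤ τ x}).Nonempty := by
    obtain ⟨x, hx⟩ := hne
    rcases le_or_gt 1 (τ x) with h1 | h1
    · exact ⟨x, hx, h1⟩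
    · obtain ⟨y, hy, s, hs, hτy, -⟩ := hp x hx h1.ne
      exact ⟨y, hy, (by nlinarith : 1 ≤ τ y)⟩
  obtain ⟨y, ⟨hyA, hy1 : 1 ≤ τ y⟩, hmin⟩ :=
    (hA.inter_right (isClosed_le continuous_const hτ)).exists_isMinOn hBne
      (hν.continuousOn.div hτ.continuousOn fun x hx ↦ (zero_lt_one.trans_le hx.2).ne')
  refine ⟨y, hyA, hy1, by_contra fun hνy ↦ ?_⟩
  have hνpos : 0 < ν y := (hν0 y).lt_of_ne' hνy
  obtain ⟨y', hy'A, s, hs, hτy', hνy'⟩ := hq y hyA (by linarith)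
  have hτneg : τ y' < 0 := by nlinarith
  obtain ⟨z, hzA, t, ht, hτz, hνz⟩ := hp y' hy'A (by linarith)
  have hτz_eq : τ z = 1 + t + t * s * τ y := by rw [hτy'] at hτz; linarith
  have hνz_eq : ν z = t * s * ν y := by rw [hνz, hνy', mul_assoc]
  have hts : 0 < t * s * τ y := by positivity
  have hτz1 : 1 ≤ τ z := by linarith
  have hslope : ν z / τ z < ν y / τ y := by
    rw [div_lt_div_iff₀ (by linarith) (by linarith), hτz_eq, hνz_eq]
    linarith [mul_pos hνpos (by linarith : 0 < 1 + t)]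
  exact hslope.not_ge (hmin ⟨hzA, hτz1⟩)

variable {E : Type*} [NormedAddCommGroup E] [InnerProductSpace ℝ E]

lemma norm_starProjection_orthogonal_eq_mul {F : Submodule ℝ E} [Fᗮ.HasOrthogonalProjection]
    {x y : E} {s : ℝ} (hs : 0 ≤ s) (h : y + s • x ∈ F) :
    ‖Fᗮ.starProjection y‖ = s * ‖Fᗮ.starProjection x‖ := by
  have h0 : Fᗮ.starProjection (y + s • x) = 0 :=
    (Submodule.starProjection_apply_eq_zero_iff _).2 (F.le_orthogonal_orthogonal h)
  rw [map_add, map_smul] at h0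
  rw [eq_neg_of_add_eq_zero_left h0, norm_neg, norm_smul, Real.norm_of_nonneg hs]

lemma exists_mem_ray_of_isOppositeMod [FiniteDimensional ℝ E] {A : Set E} (hA : IsCompact A)
    (hne : A.Nonempty) {D V : Submodule ℝ E} (hDV : D ≤ V) {p q : E} (hpq : p - q ∉ V)
    (hp : ∀ x ∈ A, x - p ∉ V → ∃ y ∈ A, IsOppositeMod D p x y)
    (hq : ∀ x ∈ A, x - q ∉ V → ∃ y ∈ A, IsOppositeMod D q x y) :
    ∃ y ∈ A, ∃ b : ℝ, 0 < b ∧ y - q - b • (p - q) ∈ D := by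
  obtain ⟨θ, hθpq, hθV⟩ := exists_linearMap_apply_eq_one_of_notMem hpq
  have hθD : ∀ u ∈ D, θ u = 0 := fun u hu ↦ hθV u (hDV hu)
  have hθp (x : E) : θ (x - p) = θ (x - q) - 1 := by
    rw [← hθpq, ← map_sub, sub_sub_sub_cancel_right]
  have hθopp {c x y : E} {s : ℝ} (h : y - c + s • (x - c) ∈ D) : θ (y - c) = -s * θ (x - c) := by
    have := hθD _ h
    rw [map_add, map_smul, smul_eq_mul] at this
    linarith
  let F := D ⊔ ℝ ∙ (p - q)
  obtain ⟨y, hyA, hy1, hy0⟩ := exists_one_le_and_eq_zero_of_chords hA hne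
      (τ := fun x ↦ θ (x - q)) (ν := fun x ↦ ‖Fᗮ.starProjection (x - q)‖)
      (θ.continuous_of_finiteDimensional.comp (by fun_prop)) (by fun_prop)
      (fun _ ↦ norm_nonneg _)
      (fun x hx hx1 ↦ by
        obtain ⟨y, hyA, s, hs, hy⟩ := hp x hx fun h ↦ hx1 (by linarith [hθp x, hθV _ h])
        refine ⟨y, hyA, s, hs, by simpa only [hθp] using hθopp hy,
          norm_starProjection_orthogonal_eq_mul hs.le ?_⟩
        have hF : y - p + s • (x - p) + (1 + s) • (p - q) ∈ F :=
          Submodule.add_mem_sup hy (Submodule.smul_mem _ _ (Submodule.mem_span_singleton_self _))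
        convert hF using 1
        module)
      (fun x hx hx0 ↦ by
        obtain ⟨y, hyA, s, hs, hy⟩ := hq x hx fun h ↦ hx0 (hθV _ h)
        exact ⟨y, hyA, s, hs, hθopp hy,
          norm_starProjection_orthogonal_eq_mul hs.le (Submodule.mem_sup_left hy)⟩)
  rw [norm_eq_zero, Submodule.starProjection_apply_eq_zero_iff,
    Submodule.orthogonal_orthogonal] at hy0
  exact ⟨y, hyA, θ (y - q), by linarith, sub_apply_smul_mem_of_mem_sup_span hθpq hθD hy0⟩

end ChordDynamics

section Reflections

variable {n : ℕ} {K : Set (Euc n)}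

lemma IsReflectionFix.sub_map_notMem_direction {S : Euc n → Euc n} {A : AffineSubspace ℝ (Euc n)}
    (hS : IsReflectionFix S A) {p : Euc n} (hp : p ∉ A) : p - S p ∉ A.direction := by
  intro h
  have hmid : midpoint ℝ p (S p) ∈ (A : Set (Euc n)) := by
    rw [← hS.2.2]
    exact map_midpoint_self_of_isometry_of_involutive hS.1 (congrFun hS.2.1) p
  apply hp
  convert AffineSubspace.vadd_mem_of_mem_direction (A.direction.smul_mem (2⁻¹ : ℝ) h) hmid using 1
  rw [midpoint_eq_smul_add, vadd_eq_add, invOf_eq_inv]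
  module

lemma IsReflectionFix.map_mem_interior {S : Euc n → Euc n} {A : AffineSubspace ℝ (Euc n)}
    (hS : IsReflectionFix S A) (hSK : S '' K = K) {p : Euc n} (hp : p ∈ interior K) :
    S p ∈ interior K := by
  have himage : S '' interior K = interior (S '' K) :=
    (IsometryEquiv.mk' S S (congrFun hS.2.1) hS.1).toHomeomorph.image_interior K
  rw [hSK] at himage
  exact himage ▸ mem_image_of_mem S hp

lemma IsSectionSymmPlane.exists_mirror {P L : AffineSubspace ℝ (Euc n)}
    (h : IsSectionSymmPlane K P L) {x : Euc n} (hx : x ∈ (P : Set (Euc n)) ∩ K) :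
    ∃ y ∈ (P : Set (Euc n)) ∩ K, midpoint ℝ x y ∈ L ∧ y - x ∈ L.directionᗮ := by
  obtain ⟨-, f, hf, hff, -, hfix, hfPK⟩ := h
  have hfx : f x ∈ (P : Set (Euc n)) ∩ K := hfPK ▸ mem_image_of_mem f hx
  have hmid : midpoint ℝ x (f x) ∈ (L : Set (Euc n)) := by
    rw [← hfix]
    exact ⟨P.convex.midpoint_mem hx.1 hfx.1,
      map_midpoint_self_of_isometry_of_involutive hf (congrFun hff) x⟩
  have hequidist : ∀ l ∈ L, dist x l = dist (f x) l := by
    intro l hl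
    have hfl : f l = l := (hfix.symm ▸ hl : l ∈ {y ∈ (P : Set (Euc n)) | f y = y}).2
    rw [← hf.dist_eq x l, hfl]
  refine ⟨f x, hfx, hmid, (Submodule.mem_orthogonal _ _).2 fun u hu ↦ ?_⟩
  simpa using EuclideanGeometry.inner_vsub_vsub_of_dist_eq_of_dist_eq (hequidist _ hmid)
    (hequidist _ (AffineSubspace.vadd_mem_of_mem_direction hu hmid))

lemma IsSectionSymmPlane.exists_mirror_isMinOn {P L : AffineSubspace ℝ (Euc n)}
    (h : IsSectionSymmPlane K P L) {θ : Euc n →ₗ[ℝ] ℝ} (hθ : ∀ u ∈ L.direction, θ u = 0)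
    {x : Euc n} (hx : x ∈ (P : Set (Euc n)) ∩ K) (hmax : IsMaxOn θ (P ∩ K) x) :
    ∃ y ∈ (P : Set (Euc n)) ∩ K, IsMinOn θ (P ∩ K) y ∧ y - x ∈ L.directionᗮ := by
  obtain ⟨y, hy, hmid, horth⟩ := h.exists_mirror hx
  refine ⟨y, hy, isMinOn_iff.2 fun z hz ↦ ?_, horth⟩
  obtain ⟨z', hz', hmid', -⟩ := h.exists_mirror hz
  have hsum : θ x + θ y = θ z + θ z' := by
    have := hθ _ (AffineSubspace.vsub_mem_direction hmid hmid')
    simp only [midpoint_eq_smul_add, vsub_eq_sub, map_sub, map_smul, map_add, smul_eq_mul,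
      invOf_eq_inv] at this
    linarith
  linarith [isMaxOn_iff.1 hmax z' hz']

/-- Every section of `K` by a plane through `c` has a line of symmetry parallel to `V`. -/
def HasSymmLinesParallelTo (K : Set (Euc n)) (V : Submodule ℝ (Euc n)) (c : Euc n) : Prop :=
  ∀ P : AffineSubspace ℝ (Euc n), finrank ℝ P.direction = 2 → c ∈ P →
    ∃ L : AffineSubspace ℝ (Euc n), finrank ℝ L.direction = 1 ∧ L.direction ≤ V ∧
      IsSectionSymmPlane K P L

end Reflections

section ShadowBoundary

variable {n : ℕ} {K : Set (Euc n)} {D V : Submodule ℝ (Euc n)} {c p q x y : Euc n}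

lemma mem_shadowBoundary_iff :
    x ∈ shadowBoundary K D ↔ x ∈ K ∧ ∀ u ∈ D, x + u ∉ interior K := by
  simp only [shadowBoundary, mem_iUnion, mem_ofPred_eq, exists_prop]
  constructor
  · rintro ⟨l, ⟨rfl, -, hl⟩, hxl, hxK⟩
    refine ⟨hxK, fun u hu hint ↦ ?_⟩
    have hmem : x + u ∈ l := add_comm x u ▸ AffineSubspace.vadd_mem_of_mem_direction hu hxl
    exact eq_empty_iff_forall_notMem.1 hl _ ⟨hmem, hint⟩
  · rintro ⟨hxK, hx⟩
    have hxl : x ∈ AffineSubspace.mk' x D := AffineSubspace.self_mem_mk' x D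
    refine ⟨AffineSubspace.mk' x D, ⟨AffineSubspace.direction_mk' x D, ⟨x, hxl, hxK⟩,
      eq_empty_iff_forall_notMem.2 ?_⟩, hxl, hxK⟩
    rintro y ⟨hyl, hy⟩
    exact hx (y - x) (by simpa using hyl) (by simpa using hy)

lemma isCompact_shadowBoundary (hK : IsCompact K) : IsCompact (shadowBoundary K D) := by
  have heq : shadowBoundary K D = K ∩ ⋂ u ∈ D, (fun x ↦ x + u) ⁻¹' (interior K)ᶜ := by
    ext x
    simp [mem_shadowBoundary_iff]
  rw [heq]
  exact hK.inter_right <| isClosed_biInter fun u _ ↦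
    isOpen_interior.isClosed_compl.preimage (by fun_prop)

lemma segment_subset_frontier_of_mem_shadowBoundary (hK : Convex ℝ K)
    (hx : x ∈ shadowBoundary K D) (hy : y ∈ shadowBoundary K D) (hxy : y - x ∈ D) :
    segment ℝ x y ⊆ frontier K := by
  rw [mem_shadowBoundary_iff] at hx hy
  intro z hz
  refine ⟨subset_closure (hK.segment_subset hx.1 hy.1 hz), ?_⟩
  rw [segment_eq_image'] at hz
  obtain ⟨t, -, rfl⟩ := hz
  exact hx.2 _ (D.smul_mem t hxy)

lemma le_one_of_mem_shadowBoundary (hK : Convex ℝ K) (hc : c ∈ interior K)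
    (hx : x ∈ shadowBoundary K D) (hy : y ∈ K) {b : ℝ} (hyx : y - c - b • (x - c) ∈ D) :
    b ≤ 1 := by
  -- Otherwise `x` lies over an inner point of the segment from `c` to `y`.
  by_contra! hb
  have hb0 : b ≠ 0 := by linarith
  have hint : y + (1 - b⁻¹) • (c - y) ∈ interior K :=
    hK.add_smul_sub_mem_interior hy hc
      ⟨sub_pos.2 (inv_lt_one_of_one_lt₀ hb), by linarith [inv_pos.2 (zero_lt_one.trans hb)]⟩
  refine (mem_shadowBoundary_iff.1 hx).2 _ (D.smul_mem b⁻¹ hyx) ?_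
  convert hint using 1
  rw [smul_sub, smul_smul, inv_mul_cancel₀ hb0]
  module

lemma sub_mem_of_mem_shadowBoundary_of_mem_ray (hK : Convex ℝ K) (hq : q ∈ interior K)
    (hx : x ∈ shadowBoundary K D) (hy : y ∈ shadowBoundary K D) {a b : ℝ} (ha : 0 < a)
    (hb : 0 < b) (hxa : x - q - a • (p - q) ∈ D) (hyb : y - q - b • (p - q) ∈ D) :
    y - x ∈ D := by
  have hle {x y : Euc n} (hx : x ∈ shadowBoundary K D) (hy : y ∈ shadowBoundary K D) {a b : ℝ}
      (ha : 0 < a) (hxa : x - q - a • (p - q) ∈ D) (hyb : y - q - b • (p - q) ∈ D) : b ≤ a := by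
    rw [← div_le_one ha]
    apply le_one_of_mem_shadowBoundary hK hq hx (mem_shadowBoundary_iff.1 hy).1
    convert D.sub_mem hyb (D.smul_mem (b / a) hxa) using 1
    rw [smul_sub (b / a) (x - q), smul_smul, div_mul_cancel₀ _ ha.ne']
    abel
  obtain rfl : a = b := le_antisymm (hle hy hx hb hyb hxa) (hle hx hy ha hxa hyb)
  simpa using D.sub_mem hyb hxa

lemma exists_isOppositeMod_of_isSectionSymmPlane (hK : Convex ℝ K) (hc : c ∈ interior K)
    (hx : x ∈ shadowBoundary K D) (hxD : x - c ∉ D) {L : AffineSubspace ℝ (Euc n)}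
    (hLD : L.direction = D)
    (hL : IsSectionSymmPlane K (AffineSubspace.mk' c (D ⊔ ℝ ∙ (x - c))) L) :
    ∃ y ∈ shadowBoundary K D, y - x ∈ Dᗮ ∧ IsOppositeMod D c x y := by
  set P := AffineSubspace.mk' c (D ⊔ ℝ ∙ (x - c))
  have hPdir : P.direction = D ⊔ ℝ ∙ (x - c) := AffineSubspace.direction_mk' _ _
  have hcP : c ∈ P := AffineSubspace.self_mem_mk' _ _
  have hxP : x ∈ P := AffineSubspace.mem_mk'.2
    (Submodule.mem_sup_right (Submodule.mem_span_singleton_self _))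
  have hxcP : x - c ∈ P.direction := AffineSubspace.vsub_mem_direction hxP hcP
  obtain ⟨θ, hθx, hθD⟩ := exists_linearMap_apply_eq_one_of_notMem hxD
  have hcoord : ∀ y ∈ P, y - c - θ (y - c) • (x - c) ∈ D := fun y hy ↦
    sub_apply_smul_mem_of_mem_sup_span hθx hθD (AffineSubspace.mem_mk'.1 hy)
  have hmax : IsMaxOn θ (P ∩ K) x := isMaxOn_iff.2 fun y hy ↦ by
    have hle := le_one_of_mem_shadowBoundary hK hc hx hy.2 (hcoord y hy.1)
    rw [← hθx, map_sub, map_sub] at hle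
    linarith
  obtain ⟨x', ⟨hx'P, hx'K⟩, hmin, horth⟩ := hL.exists_mirror_isMinOn
    (fun u hu ↦ hθD u (hLD ▸ hu)) ⟨hxP, (mem_shadowBoundary_iff.1 hx).1⟩ hmax
  have hmin_lt {y : Euc n} (hyP : y ∈ P) (hy : y ∈ interior K) : θ x' < θ y :=
    apply_lt_of_isMinOn_of_mem_interior hmin hxcP (hθx ▸ zero_lt_one) hyP hy
  have hneg : θ (x' - c) < 0 := by
    rw [map_sub]
    exact sub_neg.2 (hmin_lt hcP hc)
  refine ⟨x', mem_shadowBoundary_iff.2 ⟨hx'K, fun u hu hint ↦ ?_⟩, hLD ▸ horth,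
    -θ (x' - c), neg_pos.2 hneg, by simpa only [neg_smul, ← sub_eq_add_neg] using hcoord x' hx'P⟩
  have hx'uP : x' + u ∈ P := add_comm x' u ▸ AffineSubspace.vadd_mem_of_mem_direction
    (hPdir ▸ Submodule.mem_sup_left hu) hx'P
  have hlt := hmin_lt hx'uP hint
  rw [map_add, hθD u hu, add_zero] at hlt
  exact lt_irrefl _ hlt

lemma HasSymmLinesParallelTo.exists_isOppositeMod (hsec : HasSymmLinesParallelTo K V c)
    (hK : Convex ℝ K) (hc : c ∈ interior K) (hDV : D ≤ V) (hD : finrank ℝ D = 1)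
    (hx : x ∈ shadowBoundary K D) (hxV : x - c ∉ V) :
    ∃ y ∈ shadowBoundary K D, y - x ∈ Dᗮ ∧ IsOppositeMod D c x y := by
  have hxD : x - c ∉ D := fun h ↦ hxV (hDV h)
  obtain ⟨L, hL1, hLV, hL⟩ := hsec (AffineSubspace.mk' c (D ⊔ ℝ ∙ (x - c)))
    (by rw [AffineSubspace.direction_mk', Submodule.finrank_sup_span_singleton hxD, hD])
    (AffineSubspace.self_mem_mk' _ _)
  have hLP : L.direction ≤ D ⊔ ℝ ∙ (x - c) := by
    simpa using AffineSubspace.direction_le hL.1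
  have hLD : L.direction ≤ D :=
    (le_inf hLP hLV).trans_eq (sup_span_singleton_inf_eq_of_notMem hDV hxV)
  exact exists_isOppositeMod_of_isSectionSymmPlane hK hc hx hxD
    (Submodule.eq_of_le_of_finrank_eq hLD (hL1.trans hD.symm)) hL

lemma exists_mem_shadowBoundary_mem_ray (hKc : IsCompact K) (hK : Convex ℝ K)
    (hp : p ∈ interior K) (hq : q ∈ interior K) (hpq : p - q ∉ V)
    (hsecp : HasSymmLinesParallelTo K V p) (hsecq : HasSymmLinesParallelTo K V q)
    (hDV : D ≤ V) (hD : finrank ℝ D = 1) (hx : x ∈ shadowBoundary K D) :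
    ∃ y ∈ shadowBoundary K D, y - x ∈ Dᗮ ∧ ∃ b : ℝ, 0 < b ∧ y - q - b • (p - q) ∈ D := by
  let A := shadowBoundary K D ∩ (fun y ↦ y - x) ⁻¹' Dᗮ
  have hA : IsCompact A := (isCompact_shadowBoundary hKc).inter_right
    (D.isClosed_orthogonal.preimage (by fun_prop))
  have hchord {c : Euc n} (hc : c ∈ interior K) (hsec : HasSymmLinesParallelTo K V c) :
      ∀ y ∈ A, y - c ∉ V → ∃ z ∈ A, IsOppositeMod D c y z := by
    rintro y ⟨hy, hyx⟩ hyV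
    obtain ⟨z, hz, hzy, hopp⟩ := hsec.exists_isOppositeMod hK hc hDV hD hy hyV
    exact ⟨z, ⟨hz, by simpa using add_mem hzy hyx⟩, hopp⟩
  obtain ⟨y, ⟨hy, hyx⟩, hray⟩ := exists_mem_ray_of_isOppositeMod hA
    ⟨x, hx, by simp⟩ hDV hpq (hchord hp hsecp) (hchord hq hsecq)
  exact ⟨y, hy, hyx, hray⟩

lemma exists_affineSubspace_of_forall_sub_mem {𝕜 E : Type*} [Ring 𝕜] [AddCommGroup E]
    [Module 𝕜 E] {W : Submodule 𝕜 E} {A : Set E} (hA : ∀ x ∈ A, ∀ y ∈ A, y - x ∈ W) :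
    ∃ Δ : AffineSubspace 𝕜 E, Δ.direction = W ∧ A ⊆ Δ := by
  obtain rfl | ⟨x, hx⟩ := A.eq_empty_or_nonempty
  · exact ⟨AffineSubspace.mk' 0 W, AffineSubspace.direction_mk' _ _, empty_subset _⟩
  · exact ⟨AffineSubspace.mk' x W, AffineSubspace.direction_mk' _ _, fun y hy ↦ hA x hx y hy⟩

theorem stmt17_general (hKc : IsCompact K) (hK : Convex ℝ K)
    (hp : p ∈ interior K) (hq : q ∈ interior K) (hpq : p - q ∉ V)
    (hsecp : HasSymmLinesParallelTo K V p) (hsecq : HasSymmLinesParallelTo K V q)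
    (hDV : D ≤ V) (hD : finrank ℝ D = 1)
    (hnoseg : ¬ ∃ x y : Euc n, x ≠ y ∧ y - x ∈ D ∧ segment ℝ x y ⊆ frontier K) :
    ∃ Δ : AffineSubspace ℝ (Euc n), finrank ℝ Δ.direction = n - 1 ∧ Δ.direction = Dᗮ ∧
      shadowBoundary K D ⊆ (Δ : Set (Euc n)) := by
  obtain ⟨Δ, hΔ, hsub⟩ : ∃ Δ : AffineSubspace ℝ (Euc n), Δ.direction = Dᗮ ∧
      shadowBoundary K D ⊆ (Δ : Set (Euc n)) := by
    refine exists_affineSubspace_of_forall_sub_mem fun x hx z hz ↦ ?_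
    obtain ⟨y, hy, hyx, a, ha, hya⟩ :=
      exists_mem_shadowBoundary_mem_ray hKc hK hp hq hpq hsecp hsecq hDV hD hx
    obtain ⟨y', hy', hy'z, b, hb, hy'b⟩ :=
      exists_mem_shadowBoundary_mem_ray hKc hK hp hq hpq hsecp hsecq hDV hD hz
    have hyy' : y' - y ∈ D := sub_mem_of_mem_shadowBoundary_of_mem_ray hK hq hy hy' ha hb hya hy'b
    obtain rfl : y = y' := by_contra fun hne ↦
      hnoseg ⟨y, y', hne, hyy', segment_subset_frontier_of_mem_shadowBoundary hK hy hy' hyy'⟩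
    simpa using sub_mem hyx hy'z
  have hdim := D.finrank_add_finrank_orthogonal
  rw [hD, finrank_euclideanSpace_fin] at hdim
  exact ⟨Δ, by rw [hΔ]; omega, hΔ, hsub⟩

end ShadowBoundary

/-- For a body symmetric across `H`, with both `p ∉ H` and its mirror
image having all plane sections with lines of symmetry parallel to `H`, and no
boundary segment parallel to `H`, every shadow boundary in a direction `Γ ⊂ H`
lies in a plane orthogonal to `Γ`. -/
theorem stmt17 (K : Set (Euc 3)) (hK : IsConvexBody K)
    (H : AffineSubspace ℝ (Euc 3)) (hH : IsHyperplane H)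
    (S : Euc 3 → Euc 3) (hS : IsReflectionFix S H) (hSK : S '' K = K)
    (p : Euc 3) (hp : p ∈ interior K) (hpH : p ∉ H)
    (hsecp : ∀ P : AffineSubspace ℝ (Euc 3), IsHyperplane P → p ∈ P →
      ∃ L : AffineSubspace ℝ (Euc 3), Module.finrank ℝ L.direction = 1 ∧
        L.direction ≤ H.direction ∧ IsSectionSymmPlane K P L)
    (hsecq : ∀ P : AffineSubspace ℝ (Euc 3), IsHyperplane P → S p ∈ P →
      ∃ L : AffineSubspace ℝ (Euc 3), Module.finrank ℝ L.direction = 1 ∧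
        L.direction ≤ H.direction ∧ IsSectionSymmPlane K P L)
    (hnoseg : ¬ ∃ x y : Euc 3, x ≠ y ∧ y - x ∈ H.direction ∧ segment ℝ x y ⊆ frontier K) :
    ∀ Γ : AffineSubspace ℝ (Euc 3), (Γ : Set (Euc 3)) ⊆ (H : Set (Euc 3)) →
      Module.finrank ℝ Γ.direction = 1 →
      ∃ Δ : AffineSubspace ℝ (Euc 3), Module.finrank ℝ Δ.direction = 2 ∧
        Δ.direction = Γ.directionᗮ ∧
        shadowBoundary K Γ.direction ⊆ (Δ : Set (Euc 3)) := by
  intro Γ hΓH hΓ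
  have hΓV : Γ.direction ≤ H.direction := AffineSubspace.direction_le hΓH
  exact stmt17_general hK.1 hK.2.1 hp (hS.map_mem_interior hSK hp)
    (hS.sub_map_notMem_direction hpH) (fun P hP hpP ↦ hsecp P ⟨⟨p, hpP⟩, hP⟩ hpP)
    (fun P hP hqP ↦ hsecq P ⟨⟨S p, hqP⟩, hP⟩ hqP) hΓV hΓ
    fun ⟨x, y, hne, hxy, hseg⟩ ↦ hnoseg ⟨x, y, hne, hΓV hxy, hseg⟩
end
end
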